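/- arXiv:2206.00561 — 5 statements merged into one kernel-verified Lean document; each statement's English description precedes it below -/
import Mathlib

section
/- Fix an integer k ≥ 1 and a finite color set C with |C| ≥ 3k − 1. Let G be a minimally C-inextensible graph with a good template T = (S, c, F). Then every vertex u ∈ S has more than k neighbors in V(G)∖S. -/
open Finset

variable {V : Type*}

/-- A proper `C`-coloring of `G`: every vertex gets a color in `C` and adjacent
vertices get different colors. -/
def ProperColoring (G : SimpleGraph V) (C : Finset ℕ) (f : V → ℕ) : Prop :=
  (∀ v, f v ∈ C) ∧ ∀ ⦃u v⦄, G.Adj u v → f u ≠ f v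

/-- A proper `C`-coloring `f` of `G` respects the template `(S, c, F)` if it agrees
with `c` on `S` and avoids the forbidden list `F v` at each `v ∉ S`. -/
def Respects (G : SimpleGraph V) (C : Finset ℕ) (S : Finset V)
    (c : V → ℕ) (F : V → Finset ℕ) (f : V → ℕ) : Prop :=
  ProperColoring G C f ∧ (∀ v ∈ S, f v = c v) ∧ ∀ v ∉ S, f v ∉ F v

/-- `(S, c, F)` is a `C`-template on `G` (with `c` a proper `C`-coloring of `G[S]` and
`F v ⊆ C` for `v ∉ S`) witnessing the `C`-inextensibility of `G`:
its `k`-cost `k|S| + Σ_{v∉S}|F(v)|` is less than `2k²`, `|F(v)| ≤ k` for all `v ∉ S`,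
and no proper `C`-coloring of `G` respects it. -/
def Witnesses [Fintype V] [DecidableEq V] (k : ℕ) (G : SimpleGraph V) (C : Finset ℕ)
    (S : Finset V) (c : V → ℕ) (F : V → Finset ℕ) : Prop :=
  (∀ v ∈ S, c v ∈ C) ∧ (∀ u ∈ S, ∀ v ∈ S, G.Adj u v → c u ≠ c v) ∧
  (∀ v ∉ S, F v ⊆ C) ∧
  k * S.card + ∑ v ∈ Sᶜ, (F v).card < 2 * k ^ 2 ∧
  (∀ v ∉ S, (F v).card ≤ k) ∧
  ¬ ∃ f : V → ℕ, Respects G C S c F f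

/-- `G` is `C`-inextensible if some `C`-template witnesses its inextensibility. -/
def Inextensible [Fintype V] [DecidableEq V] (k : ℕ) (G : SimpleGraph V)
    (C : Finset ℕ) : Prop :=
  ∃ S c F, Witnesses k G C S c F

/-- `G` is minimally `C`-inextensible: it is `C`-inextensible but every proper induced
subgraph is `C`-extensible. -/
def MinInextensible [Fintype V] [DecidableEq V] (k : ℕ) (G : SimpleGraph V)
    (C : Finset ℕ) : Prop :=
  Inextensible k G C ∧ ∀ A : Finset V, A ≠ Finset.univ →
    ¬ Inextensible k (SimpleGraph.induce (↑A : Set V) G) C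

/-- If `|C| ≥ 3k − 1`, `G` is minimally `C`-inextensible with good template `(S, c, F)`,
then every vertex `u ∈ S` has more than `k` neighbors in `V(G) ∖ S`. -/
theorem precolored_vertex_many_neighbors [Fintype V] [DecidableEq V]
    (k : ℕ) (hk : 1 ≤ k) (G : SimpleGraph V) [DecidableRel G.Adj] (C : Finset ℕ)
    (hC : 3 * k - 1 ≤ C.card) (hmin : MinInextensible k G C)
    (S : Finset V) (c : V → ℕ) (F : V → Finset ℕ)
    (hT : Witnesses k G C S c F) (hgood : ∀ v ∉ S, (F v).card ≤ k - 1) :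
    ∀ u ∈ S, k < (Sᶜ.filter (fun v => G.Adj u v)).card := by
  intro u hu
  by_contra! hdeg
  obtain ⟨hcC, hcadj, hFC, hcost, -, hno⟩ := hT
  set A : Finset V := univ.erase u with hA
  have hmem : ∀ v, v ∈ A ↔ v ≠ u := by simp [hA]
  have hAu : A ≠ univ := fun h => (hmem u).1 (h ▸ mem_univ u) rfl
  let F' : V → Finset ℕ := fun v => if G.Adj u v then insert (c u) (F v) else F v
  have hF'card : ∀ v, (F' v).card ≤ (F v).card + if G.Adj u v then 1 else 0 := by
    intro v
    by_cases h : G.Adj u v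
    · simpa [F', h] using card_insert_le (c u) (F v)
    · simp [F', h]
  refine hmin.2 A hAu ⟨univ.filter (fun x => (x : V) ∈ S), fun x => c x, fun x => F' x,
    ?_, ?_, ?_, ?_, ?_, ?_⟩
  · intro v hv
    exact hcC v (by simpa using hv)
  · intro v hv w hw h
    exact hcadj v (by simpa using hv) w (by simpa using hw) h
  · intro v hv
    have hvS : (v : V) ∉ S := by simpa using hv
    by_cases h : G.Adj u v
    · simpa [F', h] using insert_subset (hcC u hu) (hFC v hvS)
    · simpa [F', h] using hFC v hvS
  · have hScard : (univ.filter (fun x : (↑A : Set V) => (x : V) ∈ S)).card = (S.erase u).card := by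
      refine card_bij (fun x _ => (x : V)) ?_ ?_ ?_
      · intro x hx
        exact mem_erase.2 ⟨(hmem x).1 x.2, by simpa using hx⟩
      · intro x _ y _ h
        exact Subtype.ext h
      · intro v hv
        exact ⟨⟨v, (hmem v).2 (ne_of_mem_erase hv)⟩, by simpa using mem_of_mem_erase hv, rfl⟩
    have hsum : ∑ x ∈ (univ.filter (fun x : (↑A : Set V) => (x : V) ∈ S))ᶜ, (F' x).card
        = ∑ v ∈ Sᶜ, (F' v).card := by
      refine sum_bij (fun x _ => (x : V)) ?_ ?_ ?_ ?_
      · intro x hx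
        simpa using hx
      · intro x _ y _ h
        exact Subtype.ext h
      · intro v hv
        have hvS : v ∉ S := by simpa using hv
        exact ⟨⟨v, (hmem v).2 fun h => hvS (h ▸ hu)⟩, by simpa using hvS, rfl⟩
      · intro x _
        rfl
    have hle : ∑ v ∈ Sᶜ, (F' v).card ≤ ∑ v ∈ Sᶜ, (F v).card + k := by
      refine (sum_le_sum fun v _ => hF'card v).trans ?_
      rw [sum_add_distrib, ← card_filter]
      gcongr
    have hSu : k * S.card = k * (S.erase u).card + k := by
      rw [← card_erase_add_one hu, Nat.mul_succ]
    rw [hScard, hsum]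
    omega
  · intro v hv
    have hvS : (v : V) ∉ S := by simpa using hv
    have h₁ := hgood v hvS
    have h₂ : (F' v).card ≤ _ := hF'card v
    change (F' v).card ≤ k
    split_ifs at h₂ <;> omega
  · rintro ⟨f, ⟨hfC, hfadj⟩, hfS, hfF⟩
    let g : V → ℕ := fun v => if h : v ∈ A then f ⟨v, h⟩ else c u
    have hgu : g u = c u := by simp [g, hmem]
    have hgA : ∀ v (h : v ∈ A), g v = f ⟨v, h⟩ := fun v h => by simp [g, h]
    have hgS : ∀ v ∈ S, g v = c v := by
      intro v hv
      by_cases h : v = u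
      · rw [h, hgu]
      · rw [hgA v ((hmem v).2 h)]
        exact hfS _ (by simpa using hv)
    have hgF : ∀ v ∉ S, g v ∉ F' v := by
      intro v hv
      have h : v ∈ A := (hmem v).2 fun h => hv (h ▸ hu)
      rw [hgA v h]
      exact hfF ⟨v, h⟩ (by simpa using hv)
    have hgadj : ∀ v, G.Adj u v → g v ≠ c u := by
      intro v h
      by_cases hv : v ∈ S
      · rw [hgS v hv]
        exact (hcadj u hu v hv h).symm
      · have := hgF v hv
        simp only [F', h, if_true, mem_insert, not_or] at this
        exact this.1
    refine hno ⟨g, ⟨?_, ?_⟩, hgS, ?_⟩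
    · intro v
      by_cases h : v ∈ A
      · rw [hgA v h]
        exact hfC _
      · simpa [g, h] using hcC u hu
    · intro v w h
      by_cases hv : v = u
      · subst hv
        rw [hgu]
        exact (hgadj w h).symm
      by_cases hw : w = u
      · subst hw
        rw [hgu]
        exact hgadj v h.symm
      rw [hgA v ((hmem v).2 hv), hgA w ((hmem w).2 hw)]
      exact hfadj (by simpa using h)
    · intro v hv hgv
      refine hgF v hv ?_
      by_cases h : G.Adj u v
      · simp [F', h, hgv]
      · simpa [F', h] using hgv
end

section
/- Fix an integer k ≥ 1 and a finite color set C with |C| ≥ 3k − 1. If G is C-inextensible, then χ(G) ≥ |C| − 3k + 4. -/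
open Finset

variable {V : Type*}

/-- The vertices of `U`, labelled by `g`, can be colored from `P` so that each vertex avoids its
forbidden list and vertices with different labels get different colors. -/
def ClasswiseColorable {ι : Type*} (g : V → ι) (U : Finset V) (P : Finset ℕ)
    (F : V → Finset ℕ) : Prop :=
  ∃ f : V → ℕ, (∀ v ∈ U, f v ∈ P ∧ f v ∉ F v) ∧ ∀ u ∈ U, ∀ v ∈ U, f u = f v → g u = g v

/-- Some color of `P` is forbidden at no more than the average number of vertices of `A`; these
vertices are then given one further color each. -/
lemma exists_palette (A : Finset V) (P : Finset ℕ) (F : V → Finset ℕ) (hP : 0 < P.card)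
    (hF : ∀ v ∈ A, (F v).card < P.card) :
    ∃ D ⊆ P, D.card ≤ (∑ v ∈ A, (F v).card) / P.card + 1 ∧ ∀ v ∈ A, ∃ x ∈ D, x ∉ F v := by
  classical
  obtain ⟨x, hxP, hx⟩ : ∃ x ∈ P,
      (A.filter fun v => x ∈ F v).card ≤ (∑ v ∈ A, (F v).card) / P.card := by
    by_contra! hcon
    have hcount : ∑ x ∈ P, (A.filter fun v => x ∈ F v).card ≤ ∑ v ∈ A, (F v).card := by
      have h := Finset.sum_card_bipartiteAbove_eq_sum_card_bipartiteBelow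
        (s := P) (t := A) fun x v => x ∈ F v
      unfold Finset.bipartiteAbove Finset.bipartiteBelow at h
      rw [h]
      refine Finset.sum_le_sum fun v _ => Finset.card_le_card fun x hx => ?_
      exact (Finset.mem_filter.1 hx).2
    have hlow := Finset.card_nsmul_le_sum P _ _ fun x hx => Nat.succ_le_of_lt (hcon x hx)
    rw [smul_eq_mul] at hlow
    have := Nat.lt_mul_div_succ (∑ v ∈ A, (F v).card) hP
    simp only [Nat.succ_eq_add_one] at hlow
    omega
  have hfree : ∀ v ∈ A, ∃ y ∈ P, y ∉ F v := fun v hv =>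
    Finset.exists_mem_notMem_of_card_lt_card (hF v hv)
  choose! y hyP hyF using hfree
  refine ⟨insert x ((A.filter fun v => x ∈ F v).image y), ?_, ?_, fun v hv => ?_⟩
  · intro z hz
    simp only [Finset.mem_insert, Finset.mem_image, Finset.mem_filter] at hz
    obtain rfl | ⟨v, hv, rfl⟩ := hz
    exacts [hxP, hyP v hv.1]
  · refine (Finset.card_insert_le _ _).trans ?_
    have := Finset.card_image_le (s := A.filter fun v => x ∈ F v) (f := y)
    omega
  · by_cases hxv : x ∈ F v
    · exact ⟨y v, Finset.mem_insert_of_mem (Finset.mem_image_of_mem _ (by simp [hv, hxv])),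
        hyF v hv⟩
    · exact ⟨x, Finset.mem_insert_self _ _, hxv⟩

/-- A palette `D` that serves all vertices labelled `i` reduces the problem to the other labels. -/
lemma ClasswiseColorable.of_palette {ι : Type*} [DecidableEq ι] {g : V → ι} {U : Finset V}
    {P D : Finset ℕ} {F : V → Finset ℕ} (i : ι) (hD : D ⊆ P)
    (hi : ∀ v ∈ U.filter (g · = i), ∃ x ∈ D, x ∉ F v)
    (h : ClasswiseColorable g (U.filter (g · ≠ i)) (P \ D) F) :
    ClasswiseColorable g U P F := by
  obtain ⟨f, hf, hfg⟩ := h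
  simp only [Finset.mem_filter, Finset.mem_sdiff, and_imp] at hf hi hfg
  choose! x hxD hxF using hi
  refine ⟨fun v => if g v = i then x v else f v, fun v hv => ?_, fun u hu v hv huv => ?_⟩
  · by_cases hgv : g v = i
    · simpa [hgv] using ⟨hD (hxD v hv hgv), hxF v hv hgv⟩
    · simpa [hgv] using ⟨(hf v hv hgv).1.1, (hf v hv hgv).2⟩
  · by_cases hgu : g u = i <;> by_cases hgv : g v = i <;>
      simp only [hgu, hgv, if_true, if_false] at huv
    · rw [hgu, hgv]
    · exact absurd (huv ▸ hxD u hu hgu) (hf v hv hgv).1.2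
    · exact absurd (huv ▸ hxD v hv hgv) (hf u hu hgu).1.2
    · exact hfg u hu hgu v hv hgv huv

/-- With `|P| ≥ |I| + k + s - 3` colors for the labels in `I` and lists of fewer than `k` forbidden
colors, a total of at most `s * k - 2` forbidden colors can be avoided. -/
lemma classwiseColorable_of_sum_add_one_lt {ι : Type*} [DecidableEq ι] {k : ℕ} (g : V → ι)
    (F : V → Finset ℕ) (I : Finset ι) :
    ∀ (U : Finset V) (P : Finset ℕ) (s : ℕ), (∀ v ∈ U, g v ∈ I) → (∀ v ∈ U, (F v).card < k) →
      I.card + k + s ≤ P.card + 3 → ∑ v ∈ U, (F v).card + 1 < s * k →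
      ClasswiseColorable g U P F := by
  induction I using Finset.induction_on with
  | empty =>
    intro U P s hU _ _ _
    exact ⟨fun _ => 0, fun v hv => absurd (hU v hv) (Finset.notMem_empty _),
      fun v hv => absurd (hU v hv) (Finset.notMem_empty _)⟩
  | insert i I hiI ih =>
    intro U P s hU hF hP hsum
    rw [Finset.card_insert_of_notMem hiI] at hP
    have hsplit := Finset.sum_filter_add_sum_filter_not U (g · = i) fun v => (F v).card
    set w := ∑ v ∈ U.filter (g · = i), (F v).card with hw
    have hs : 0 < s := Nat.pos_of_ne_zero (by rintro rfl; simp at hsum)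
    have hk : 0 < k := Nat.pos_of_ne_zero (by rintro rfl; simp at hsum)
    have hcases : k ≤ P.card ∨ w < P.card ∧ s = 1 := by
      by_contra! hcon
      obtain rfl : s = 1 := by omega
      have := hcon.2
      omega
    have hPpos : 0 < P.card := by omega
    have hFA : ∀ v ∈ U.filter (g · = i), (F v).card < P.card := by
      intro v hv
      obtain h | h := hcases
      · exact (hF v (Finset.mem_filter.1 hv).1).trans_le h
      · exact (Finset.single_le_sum (f := fun v => (F v).card) (by simp) hv).trans_lt h.1
    obtain ⟨D, hDP, hD, hDA⟩ := exists_palette _ P F hPpos hFA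
    rw [← hw] at hD
    have hqk : w / P.card * k ≤ w := by
      obtain h | h := hcases
      · exact (Nat.mul_le_mul_left _ h).trans (Nat.div_mul_le_self _ _)
      · simp [Nat.div_eq_of_lt h.1]
    set q := w / P.card
    have hqs : q < s := lt_of_mul_lt_mul_right (a := k) (by omega) (Nat.zero_le _)
    refine .of_palette i hDP hDA (ih _ _ (s - q) (fun v hv => ?_) (fun v hv => ?_) ?_ ?_)
    · rw [Finset.mem_filter] at hv
      exact (Finset.mem_insert.1 (hU v hv.1)).resolve_left hv.2
    · exact hF v (Finset.mem_filter.1 hv).1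
    · rw [Finset.card_sdiff_of_subset hDP]
      omega
    · rw [Nat.sub_mul]
      simp only [ne_eq]
      omega

/-- With at least two labels, `classwiseColorable_of_sum_add_one_lt` extends to a total of
`s * k - 1` forbidden colors. -/
lemma classwiseColorable_of_sum_lt {ι : Type*} [DecidableEq ι] {k : ℕ} (hk : 2 ≤ k) (g : V → ι)
    (F : V → Finset ℕ) (I : Finset ι) (hI : 2 ≤ I.card) (U : Finset V) (P : Finset ℕ) (s : ℕ)
    (hU : ∀ v ∈ U, g v ∈ I) (hF : ∀ v ∈ U, (F v).card < k) (hP : I.card + k + s ≤ P.card + 3)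
    (hsum : ∑ v ∈ U, (F v).card < s * k) : ClasswiseColorable g U P F := by
  by_cases hsum' : ∑ v ∈ U, (F v).card + 1 < s * k
  · exact classwiseColorable_of_sum_add_one_lt g F I U P s hU hF hP hsum'
  have hs : 0 < s := Nat.pos_of_ne_zero (by rintro rfl; simp at hsum)
  have hsk : k ≤ s * k := Nat.le_mul_of_pos_left k hs
  obtain ⟨a, haU, ha⟩ : ∃ a ∈ U, (F a).card ≠ 0 := by
    by_contra! h
    rw [Finset.sum_eq_zero h] at hsum'
    omega
  have hsplit := Finset.sum_filter_add_sum_filter_not U (g · = g a) fun v => (F v).card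
  have hwpos : 0 < ∑ v ∈ U.filter (g · = g a), (F v).card :=
    (Nat.pos_of_ne_zero ha).trans_le
      (Finset.single_le_sum (f := fun v => (F v).card) (by simp) (by simp [haU]))
  obtain ⟨D, hDP, hD, hDA⟩ := exists_palette (U.filter (g · = g a)) P F (by omega)
    fun v hv => (hF v (Finset.mem_filter.1 hv).1).trans_le (by omega)
  set w := ∑ v ∈ U.filter (g · = g a), (F v).card
  have hqw : w / P.card * P.card ≤ w := Nat.div_mul_le_self _ _
  set q := w / P.card
  have hqk : q * k < w := by
    obtain hq | hq := Nat.eq_zero_or_pos q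
    · simpa [hq] using hwpos
    · obtain rfl | hs2 : s = 1 ∨ 2 ≤ s := by omega
      · have := Nat.le_mul_of_pos_left P.card hq
        omega
      · exact ((Nat.mul_lt_mul_left hq).2 (by omega)).trans_le hqw
  have hqs : q < s := lt_of_mul_lt_mul_right (a := k) (by omega) (Nat.zero_le _)
  refine .of_palette (g a) hDP hDA (classwiseColorable_of_sum_add_one_lt (k := k) g F
    (I.erase (g a)) _ _ (s - q) (fun v hv => ?_) (fun v hv => ?_) ?_ ?_)
  · rw [Finset.mem_filter] at hv
    exact Finset.mem_erase.2 ⟨hv.2, hU v hv.1⟩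
  · exact hF v (Finset.mem_filter.1 hv).1
  · rw [Finset.card_sdiff_of_subset hDP, Finset.card_erase_of_mem (hU a haU)]
    omega
  · rw [Nat.sub_mul]
    simp only [ne_eq]
    omega

/-- Greedy choice of distinct colors outside `B` and outside the forbidden lists. -/
lemma exists_injOn_coloring [DecidableEq V] (C B : Finset ℕ) (F : V → Finset ℕ) (T : Finset V)
    (hT : ∀ v ∈ T, (F v).card + B.card + T.card ≤ C.card) :
    ∃ c : V → ℕ, Set.InjOn c T ∧ ∀ v ∈ T, c v ∈ C ∧ c v ∉ B ∧ c v ∉ F v := by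
  induction T using Finset.induction_on with
  | empty => exact ⟨fun _ => 0, by simp, by simp⟩
  | insert a T haT ih =>
    rw [Finset.card_insert_of_notMem haT] at hT
    obtain ⟨c, hinj, hc⟩ := ih fun v hv => by
      have := hT v (Finset.mem_insert_of_mem hv)
      omega
    obtain ⟨x, hxC, hx⟩ : ∃ x ∈ C, x ∉ F a ∪ B ∪ T.image c := by
      refine Finset.exists_mem_notMem_of_card_lt_card ?_
      have := hT a (Finset.mem_insert_self _ _)
      have := Finset.card_union_le (F a ∪ B) (T.image c)
      have := Finset.card_union_le (F a) B
      have := Finset.card_image_le (s := T) (f := c)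
      omega
    simp only [Finset.mem_union, Finset.mem_image, not_or, not_exists, not_and] at hx
    have hne : ∀ v ∈ T, v ≠ a := fun v hv h => haT (h ▸ hv)
    refine ⟨Function.update c a x, ?_, fun v hv => ?_⟩
    · intro u hu v hv huv
      simp only [Finset.coe_insert, Set.mem_insert_iff, Finset.mem_coe] at hu hv
      obtain rfl | hu := hu <;> obtain rfl | hv := hv
      · rfl
      · rw [Function.update_self, Function.update_of_ne (hne v hv)] at huv
        exact absurd huv.symm (hx.2 v hv)
      · rw [Function.update_self, Function.update_of_ne (hne u hu)] at huv
        exact absurd huv (hx.2 u hu)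
      · rw [Function.update_of_ne (hne u hu), Function.update_of_ne (hne v hv)] at huv
        exact hinj hu hv huv
    · obtain rfl | hv := Finset.mem_insert.1 hv
      · simpa using ⟨hxC, hx.1.2, hx.1.1⟩
      · simpa [Function.update_of_ne (hne v hv)] using hc v hv

lemma exists_respects_of_classwiseColorable [Fintype V] [DecidableEq V] {ι : Type*}
    {G : SimpleGraph V} {C : Finset ℕ} {S : Finset V} {c : V → ℕ} {F : V → Finset ℕ}
    (hcC : ∀ v ∈ S, c v ∈ C) (hc : ∀ u ∈ S, ∀ v ∈ S, G.Adj u v → c u ≠ c v)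
    (g : G.Coloring ι) (h : ClasswiseColorable g Sᶜ (C \ S.image c) F) :
    ∃ f, Respects G C S c F f := by
  obtain ⟨f, hf, hfg⟩ := h
  simp only [Finset.mem_compl, Finset.mem_sdiff, Finset.mem_image, not_exists, not_and] at hf hfg
  refine ⟨fun v => if v ∈ S then c v else f v, ⟨fun v => ?_, fun u v huv => ?_⟩,
    fun v hv => if_pos hv, fun v hv => ?_⟩
  · by_cases hv : v ∈ S
    · simpa [hv] using hcC v hv
    · simpa [hv] using (hf v hv).1.1
  · by_cases hu : u ∈ S <;> by_cases hv : v ∈ S <;> simp only [hu, hv, if_true, if_false]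
    · exact hc u hu v hv huv
    · exact (hf v hv).1.2 u hu
    · exact fun h => (hf u hu).1.2 v hv h.symm
    · exact fun h => g.valid huv (hfg u hu v hv h)
  · simpa [hv] using (hf v hv).2

/-- A coloring with `|C|` colors can be permuted so as to agree with a prescribed color at one
vertex. -/
lemma exists_respects_singleton [DecidableEq V] {G : SimpleGraph V} {C : Finset ℕ}
    (g : G.Coloring (Fin C.card)) {a : V} {c : V → ℕ} {F : V → Finset ℕ} (ha : c a ∈ C)
    (hF : ∀ v ∉ ({a} : Finset V), F v = ∅) : ∃ f, Respects G C {a} c F f := by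
  let e : Fin C.card ≃ C := C.equivFin.symm
  let p : Fin C.card ≃ C := e.trans (Equiv.swap (e (g a)) ⟨c a, ha⟩)
  refine ⟨fun v => p (g v), ⟨fun v => (p (g v)).2, fun u v huv h => ?_⟩, fun v hv => ?_,
    fun v hv => by simp [hF v hv]⟩
  · exact g.valid huv (p.injective (Subtype.ext h))
  · obtain rfl := Finset.mem_singleton.1 hv
    simp [p]

/-- A template of cost less than `2 * k ^ 2` with lists of fewer than `k` forbidden colors extends
if `G` has a coloring with `|C| - 3 * k + 3` colors. -/
lemma exists_respects_of_card_lt [Fintype V] [DecidableEq V] {k : ℕ} (hk : 1 ≤ k)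
    {G : SimpleGraph V} {C : Finset ℕ} (hC : 3 * k - 1 ≤ C.card) {S : Finset V} {c : V → ℕ}
    {F : V → Finset ℕ} (hcC : ∀ v ∈ S, c v ∈ C)
    (hc : ∀ u ∈ S, ∀ v ∈ S, G.Adj u v → c u ≠ c v)
    (hcost : k * S.card + ∑ v ∈ Sᶜ, (F v).card < 2 * k ^ 2) (hF : ∀ v ∉ S, (F v).card < k)
    (g : G.Coloring (Fin (C.card + 3 - 3 * k))) : ∃ f, Respects G C S c F f := by
  have hS : S.card < 2 * k := lt_of_mul_lt_mul_left (a := k)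
    ((Nat.le_add_right _ _).trans_lt (hcost.trans_eq (by ring))) (Nat.zero_le _)
  have hsum : ∑ v ∈ Sᶜ, (F v).card < (2 * k - S.card) * k := by
    have hle : S.card * k ≤ 2 * k * k := Nat.mul_le_mul_right _ hS.le
    rw [Nat.sub_mul, Nat.lt_sub_iff_add_lt]
    linarith
  have hF' : ∀ v ∈ Sᶜ, (F v).card < k := fun v hv => hF v (Finset.mem_compl.1 hv)
  have hP : (Finset.univ : Finset (Fin (C.card + 3 - 3 * k))).card + k + (2 * k - S.card) ≤
      (C \ S.image c).card + 3 := by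
    have := Finset.le_card_sdiff (S.image c) C
    have := Finset.card_image_le (s := S) (f := c)
    rw [Finset.card_univ, Fintype.card_fin]
    omega
  obtain rfl | hk2 : k = 1 ∨ 2 ≤ k := by omega
  · have hF0 : ∀ v ∉ S, F v = ∅ := fun v hv => Finset.card_eq_zero.1 (Nat.lt_one_iff.1 (hF v hv))
    obtain hS0 | hS1 : S.card = 0 ∨ S.card = 1 := by omega
    · refine exists_respects_of_classwiseColorable hcC hc g
        (classwiseColorable_of_sum_add_one_lt g F Finset.univ _ _ _ (by simp) hF' hP ?_)
      rw [Finset.sum_eq_zero fun v hv => by simp [hF0 v (Finset.mem_compl.1 hv)], hS0]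
      norm_num
    · obtain ⟨a, rfl⟩ := Finset.card_eq_one.1 hS1
      exact exists_respects_singleton g (hcC a (by simp)) hF0
  · exact exists_respects_of_classwiseColorable hcC hc g
      (classwiseColorable_of_sum_lt hk2 g F Finset.univ
        (by rw [Finset.card_univ, Fintype.card_fin]; omega) _ _ _ (by simp) hF' hP hsum)

/-- Lists of exactly `k` forbidden colors are allowed too: such vertices can be colored beforehand
at no extra cost. -/
lemma exists_respects_of_colorable [Fintype V] [DecidableEq V] {k : ℕ} (hk : 1 ≤ k)
    {G : SimpleGraph V} {C : Finset ℕ} (hC : 3 * k - 1 ≤ C.card) {S : Finset V} {c : V → ℕ}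
    {F : V → Finset ℕ} (hcC : ∀ v ∈ S, c v ∈ C)
    (hc : ∀ u ∈ S, ∀ v ∈ S, G.Adj u v → c u ≠ c v)
    (hcost : k * S.card + ∑ v ∈ Sᶜ, (F v).card < 2 * k ^ 2) (hF : ∀ v ∉ S, (F v).card ≤ k)
    (hG : G.Colorable (C.card + 3 - 3 * k)) : ∃ f, Respects G C S c F f := by
  obtain ⟨g⟩ := hG
  set T := Sᶜ.filter fun v => (F v).card = k with hT
  have hST : Disjoint S T := by
    rw [Finset.disjoint_left]
    intro v hv
    simp [hT, hv]
  have hcompl : (S ∪ T)ᶜ = Sᶜ.filter fun v => ¬ (F v).card = k := by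
    ext v
    simp only [hT, Finset.mem_compl, Finset.mem_union, Finset.mem_filter]
    tauto
  have hcost' : k * (S ∪ T).card + ∑ v ∈ (S ∪ T)ᶜ, (F v).card < 2 * k ^ 2 := by
    have hsplit := Finset.sum_filter_add_sum_filter_not Sᶜ (fun v => (F v).card = k)
      fun v => (F v).card
    have hsumT : ∑ v ∈ T, (F v).card = T.card * k :=
      Finset.sum_const_nat fun v hv => (Finset.mem_filter.1 hv).2
    rw [hcompl, Finset.card_union_of_disjoint hST]
    rw [← hT, hsumT] at hsplit
    linarith
  have hcard : (S ∪ T).card < 2 * k :=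
    lt_of_mul_lt_mul_left (a := k)
      ((Nat.le_add_right _ _).trans_lt (hcost'.trans_eq (by ring))) (Nat.zero_le _)
  rw [Finset.card_union_of_disjoint hST] at hcard
  obtain ⟨d, hdinj, hd⟩ := exists_injOn_coloring C (S.image c) F T fun v hv => by
    have := (Finset.mem_filter.1 hv).2
    have := Finset.card_image_le (s := S) (f := c)
    omega
  have hTS : ∀ v ∈ S ∪ T, v ∉ S → v ∈ T := fun v hv h => (Finset.mem_union.1 hv).resolve_left h
  have hdc : ∀ u ∈ S, ∀ v ∈ T, c u ≠ d v := fun u hu v hv h =>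
    (hd v hv).2.1 (h ▸ Finset.mem_image_of_mem c hu)
  obtain ⟨f, hf, hfc, hfF⟩ := exists_respects_of_card_lt hk hC (S := S ∪ T)
    (c := fun v => if v ∈ S then c v else d v) (F := F) (G := G)
    (fun v hv => by
      by_cases hvS : v ∈ S
      · simpa [hvS] using hcC v hvS
      · simpa [hvS] using (hd v (hTS v hv hvS)).1)
    (fun u hu v hv huv => by
      by_cases huS : u ∈ S <;> by_cases hvS : v ∈ S <;>
        simp only [huS, hvS, if_true, if_false]
      · exact hc u huS v hvS huv
      · exact hdc u huS v (hTS v hv hvS)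
      · exact (hdc v hvS u (hTS u hu huS)).symm
      · exact fun h => huv.ne (hdinj (hTS u hu huS) (hTS v hv hvS) h))
    hcost'
    (fun v hv => by
      have hv' : v ∈ (S ∪ T)ᶜ := Finset.mem_compl.2 hv
      rw [hcompl, Finset.mem_filter, Finset.mem_compl] at hv'
      exact lt_of_le_of_ne (hF v hv'.1) hv'.2)
    g
  refine ⟨f, hf, fun v hv => ?_, fun v hv => ?_⟩
  · simpa [hv] using hfc v (Finset.mem_union_left _ hv)
  · by_cases hvT : v ∈ T
    · have := hfc v (Finset.mem_union_right _ hvT)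
      simp only [hv, if_false] at this
      exact this ▸ (hd v hvT).2.2
    · exact hfF v (by simp [hv, hvT])

/-- If `|C| ≥ 3k − 1` and `G` is `C`-inextensible, then `χ(G) ≥ |C| − 3k + 4`
(stated without truncated subtraction as `|C| + 4 ≤ χ(G) + 3k`). -/
theorem inextensible_chromatic_weak [Fintype V] [DecidableEq V] (k : ℕ) (hk : 1 ≤ k)
    (G : SimpleGraph V) (C : Finset ℕ) (hC : 3 * k - 1 ≤ C.card)
    (h : Inextensible k G C) :
    ((C.card : ℕ∞)) + 4 ≤ G.chromaticNumber + ((3 * k : ℕ) : ℕ∞) := by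
  obtain ⟨S, c, F, hcC, hc, -, hcost, hF, hno⟩ := h
  by_contra! hlt
  refine hno (exists_respects_of_colorable hk hC hcC hc hcost hF ?_)
  rw [← SimpleGraph.chromaticNumber_le_iff_colorable]
  generalize G.chromaticNumber = χ at hlt ⊢
  cases χ with
  | top => simp at hlt
  | coe t =>
    norm_cast at hlt ⊢
    omega
end

section
/- For every integer k ≥ 1, every graph G with chromatic number χ(G) ≥ 4k − 1 contains a (k+1)-connected subgraph with more than χ(G) − k vertices and chromatic number at least χ(G) − 2k + 1. -/
variable {V : Type*}

/-- `G` is `n`-connected: it has more than `n` vertices and no cutset of fewer than `n`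
vertices. -/
def KConnected (G : SimpleGraph V) (n : ℕ) : Prop :=
  n < Nat.card V ∧ ∀ X : Set V, X.ncard < n →
    ¬ ∃ A B : Set V, A.Nonempty ∧ B.Nonempty ∧ Disjoint A B ∧ A ∪ B = Xᶜ ∧
        ∀ a ∈ A, ∀ b ∈ B, ¬ G.Adj a b

open Finset in
/-- Colouring from lists: if the vertices of `W` are split into `p` classes, there are at least
`p + e` colours, and few colours are forbidden in total, then there is a colouring that avoids the
forbidden colours and is constant only within classes. -/
theorem exists_coloring_refining_classes {γ ι : Type*} [DecidableEq V] [DecidableEq γ]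
    [DecidableEq ι] [Nonempty γ] (F : V → Finset γ) (cls : V → ι) (W : Finset V) (I : Finset ι)
    (Q : Finset γ) (e : ℕ) (hcls : ∀ v ∈ W, cls v ∈ I) (hQ : #I + e ≤ #Q)
    (hF : ∀ v ∈ W, #(F v) ≤ #I) (hsum : W.Nonempty → ∑ v ∈ W, #(F v) < (e + 1) * #I) :
    ∃ g : V → γ, (∀ v ∈ W, g v ∈ Q ∧ g v ∉ F v) ∧
      ∀ u ∈ W, ∀ v ∈ W, g u = g v → cls u = cls v := by
  induction hN : #W + #I using Nat.strong_induction_on generalizing W I Q e with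
  | _ N ih =>
  rcases W.eq_empty_or_nonempty with rfl | hW
  · exact ⟨fun _ => Classical.arbitrary γ, by simp, by simp⟩
  have hs := hsum hW
  by_cases hbig : ∃ v ∈ W, #(F v) = #I
  · obtain ⟨v, hv, hvI⟩ := hbig
    have hsplit := Finset.add_sum_erase W (fun v => #(F v)) hv
    obtain ⟨d, rfl⟩ : ∃ d, e = d + 1 := by
      rcases e with _ | d
      · simp at hs; omega
      · exact ⟨d, rfl⟩
    obtain ⟨β, hβ⟩ : (Q \ F v).Nonempty := by
      apply Finset.card_pos.1
      have := Finset.le_card_sdiff (F v) Q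
      omega
    rw [mem_sdiff] at hβ
    have hcard := Finset.card_erase_add_one hv
    have hQc := Finset.card_erase_add_one hβ.1
    obtain ⟨g, hg, hgc⟩ := ih _ (by rw [← hN]; omega) (W.erase v) I (Q.erase β) d
      (fun u hu => hcls u (mem_of_mem_erase hu)) (by omega)
      (fun u hu => hF u (mem_of_mem_erase hu)) (fun _ => by nlinarith) rfl
    have hgβ : ∀ u ∈ W, u ≠ v → g u ≠ β := fun u hu huv =>
      ne_of_mem_erase (hg u (mem_erase.2 ⟨huv, hu⟩)).1
    refine ⟨Function.update g v β, fun u hu => ?_, fun u hu w hw h => ?_⟩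
    · rcases eq_or_ne u v with rfl | huv
      · simpa using hβ
      · have := hg u (mem_erase.2 ⟨huv, hu⟩)
        simpa [huv] using ⟨mem_of_mem_erase this.1, this.2⟩
    · rcases eq_or_ne u v with rfl | huv <;> rcases eq_or_ne w u with rfl | hwu
      · rfl
      · simp only [Function.update_self, Function.update_of_ne hwu] at h
        exact absurd h.symm (hgβ w hw hwu)
      · rfl
      · rcases eq_or_ne w v with rfl | hwv
        · simp only [Function.update_self, Function.update_of_ne huv] at h
          exact absurd h (hgβ u hu huv)
        · simp only [Function.update_of_ne hwv, Function.update_of_ne huv] at h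
          exact hgc u (mem_erase.2 ⟨huv, hu⟩) w (mem_erase.2 ⟨hwv, hw⟩) h
  · push Not at hbig
    have hF' : ∀ v ∈ W, #(F v) < #I := fun v hv => lt_of_le_of_ne (hF v hv) (hbig v hv)
    obtain ⟨w₀, hw₀⟩ := hW
    have hI : I.Nonempty := ⟨_, hcls _ hw₀⟩
    -- the class with the largest total number of forbidden colours
    obtain ⟨i, hi, hmax⟩ := exists_max_image I (fun i => ∑ v ∈ W with cls v = i, #(F v)) hI
    have htot : ∑ v ∈ W, #(F v) = ∑ i ∈ I, ∑ v ∈ W with cls v = i, #(F v) :=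
      (sum_fiberwise_of_maps_to hcls _).symm
    have hle : ∑ v ∈ W, #(F v) ≤ #I * ∑ v ∈ W with cls v = i, #(F v) := by
      rw [htot]
      simpa using sum_le_card_nsmul I _ _ hmax
    have hrest : ∑ v ∈ W with cls v = i, #(F v) + ∑ v ∈ W with cls v ≠ i, #(F v)
        = ∑ v ∈ W, #(F v) := sum_filter_add_sum_filter_not _ _ _
    have hIpos : 0 < #I := hI.card_pos
    have hQne : Q.Nonempty := card_pos.1 (by omega)
    -- the colour forbidden at the fewest vertices of that class
    obtain ⟨α, hα, hmin⟩ := exists_min_image Q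
      (fun a => #{v ∈ W | cls v = i ∧ a ∈ F v}) hQne
    have hcount : #Q * #{v ∈ W | cls v = i ∧ α ∈ F v} ≤ ∑ v ∈ W with cls v = i, #(F v) := by
      calc #Q * #{v ∈ W | cls v = i ∧ α ∈ F v}
          ≤ ∑ a ∈ Q, #{v ∈ W | cls v = i ∧ a ∈ F v} := by
            simpa using card_nsmul_le_sum Q _ _ hmin
        _ = ∑ a ∈ Q, ∑ v ∈ W with cls v = i, if a ∈ F v then 1 else 0 := by
            simp only [card_filter, sum_filter, ite_and]
        _ = ∑ v ∈ W with cls v = i, ∑ a ∈ Q, if a ∈ F v then 1 else 0 := sum_comm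
        _ ≤ ∑ v ∈ W with cls v = i, #(F v) := by
            refine sum_le_sum fun v _ => ?_
            rw [← card_filter]
            exact card_le_card fun a ha => (mem_filter.1 ha).2
    set L : Finset V := {v ∈ W | cls v = i ∧ α ∈ F v} with hL
    set Y := ∑ v ∈ W with cls v = i, #(F v)
    set R := ∑ v ∈ W with cls v ≠ i, #(F v)
    obtain ⟨p, hp⟩ : ∃ p, #I = p + 1 := ⟨#I - 1, by omega⟩
    rw [hp] at hs hle
    have hLe : #L ≤ e := by
      by_contra! h
      have h1 : (p + 1 + e) * (e + 1) ≤ #Q * #L := Nat.mul_le_mul (by omega) h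
      nlinarith
    obtain ⟨d, hd⟩ := Nat.exists_eq_add_of_le hLe
    have hQα := card_erase_add_one hα
    -- the vertices of the class at which this colour is forbidden get private colours
    obtain ⟨f, hfinj, hf⟩ := (all_card_le_biUnion_card_iff_exists_injective
      (fun v : L => Q.erase α \ F v)).1 (by
        intro s
        rcases s.eq_empty_or_nonempty with rfl | ⟨v, hv⟩
        · simp
        · have h1 : #s ≤ #L := by simpa using card_le_univ s
          have h2 : #(Q.erase α \ F v) ≤ #(s.biUnion fun v : L => Q.erase α \ F v) :=
            card_le_card (subset_biUnion_of_mem (fun v : L => Q.erase α \ F v) hv)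
          have h3 := le_card_sdiff (F v) (Q.erase α)
          have h4 := hF' v (mem_filter.1 v.2).1
          omega)
    have himg : #(univ.image f) = #L := by
      rw [card_image_of_injective _ hfinj]; simp
    have hsub : univ.image f ⊆ Q.erase α := fun a ha => by
      obtain ⟨v, -, rfl⟩ := mem_image.1 ha
      exact (mem_sdiff.1 (hf v)).1
    have hQ' : #(Q.erase α \ univ.image f) + #L = #(Q.erase α) := by
      rw [← himg]; exact card_sdiff_add_card_eq_card hsub
    have hIe := card_erase_add_one hi
    obtain ⟨g, hg, hgc⟩ := ih _ (by
        rw [← hN]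
        exact Nat.add_lt_add_of_le_of_lt (card_filter_le W fun v => cls v ≠ i)
          (card_erase_lt_of_mem hi))
      {v ∈ W | cls v ≠ i} (I.erase i) (Q.erase α \ univ.image f) d
      (fun v hv => mem_erase.2 ⟨(mem_filter.1 hv).2, hcls v (mem_filter.1 hv).1⟩)
      (by omega) (fun v hv => by have := hF' v (mem_filter.1 hv).1; omega)
      (fun ⟨v, hv⟩ => by
        have hp1 : 0 < #(I.erase i) :=
          card_pos.2 ⟨_, mem_erase.2 ⟨(mem_filter.1 hv).2, hcls v (mem_filter.1 hv).1⟩⟩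
        have hpe : #(I.erase i) = p := by omega
        rw [hpe] at hp1 ⊢
        change R < _
        rcases Nat.eq_zero_or_pos #L with h0 | h0
        · have : d = e := by omega
          subst this
          by_contra! h
          nlinarith
        · have h1 : (p + 1 + e) * #L ≤ #Q * #L := Nat.mul_le_mul_right _ (by omega)
          subst hd
          nlinarith) rfl
    have hfi : ∀ v : L, f v ∈ Q ∧ f v ≠ α ∧ f v ∉ F v := fun v => by
      have := hf v
      simp only [mem_sdiff, mem_erase] at this
      exact ⟨this.1.2, this.1.1, this.2⟩
    have hgi : ∀ v ∈ W, cls v ≠ i → g v ∈ Q ∧ g v ≠ α ∧ (∀ u, f u ≠ g v) ∧ g v ∉ F v := by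
      intro v hv hvi
      have := hg v (mem_filter.2 ⟨hv, hvi⟩)
      simp only [mem_sdiff, mem_erase, mem_image, mem_univ, true_and, not_exists] at this
      exact ⟨this.1.1.2, this.1.1.1, this.1.2, this.2⟩
    refine ⟨fun v => if h : v ∈ L then f ⟨v, h⟩ else if cls v = i then α else g v,
      fun v hv => ?_, fun u hu v hv h => ?_⟩
    · by_cases hvL : v ∈ L
      · simpa [hvL] using ⟨(hfi ⟨v, hvL⟩).1, (hfi ⟨v, hvL⟩).2.2⟩
      · by_cases hvi : cls v = i
        · have : α ∉ F v := fun h => hvL (mem_filter.2 ⟨hv, hvi, h⟩)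
          simpa [hvL, hvi] using ⟨hα, this⟩
        · simpa [hvL, hvi] using ⟨(hgi v hv hvi).1, (hgi v hv hvi).2.2.2⟩
    · have hLi : ∀ v ∈ L, cls v = i := fun v hv => (mem_filter.1 hv).2.1
      by_cases hui : cls u = i <;> by_cases hvi : cls v = i
      · rw [hui, hvi]
      · have hvL : v ∉ L := fun h => hvi (hLi v h)
        by_cases huL : u ∈ L
        · simp only [huL, hvL, hvi, dite_true, dite_false, if_false] at h
          exact absurd h ((hgi v hv hvi).2.2.1 _)
        · simp only [huL, hvL, hui, hvi, dite_false, if_false, if_true] at h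
          exact absurd h.symm (hgi v hv hvi).2.1
      · have huL : u ∉ L := fun h => hui (hLi u h)
        by_cases hvL : v ∈ L
        · simp only [huL, hvL, hui, dite_true, dite_false, if_false] at h
          exact absurd h.symm ((hgi u hu hui).2.2.1 _)
        · simp only [huL, hvL, hui, hvi, dite_false, if_false, if_true] at h
          exact absurd h (hgi u hu hui).2.1
      · have huL : u ∉ L := fun h => hui (hLi u h)
        have hvL : v ∉ L := fun h => hvi (hLi v h)
        simp only [huL, hvL, hui, hvi, dite_false, if_false] at h
        exact hgc u (mem_filter.2 ⟨hu, hui⟩) v (mem_filter.2 ⟨hv, hvi⟩) h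

/-- The subgraph induced by `s` has no cutset of at most `k` vertices. -/
def NoSmallCutset [DecidableEq V] (G : SimpleGraph V) (k : ℕ) (s : Finset V) : Prop :=
  ∀ S A B : Finset V, S ∪ (A ∪ B) = s → Disjoint S A → Disjoint S B → Disjoint A B →
    S.card ≤ k → A.Nonempty → B.Nonempty → ∃ a ∈ A, ∃ b ∈ B, G.Adj a b

open Finset in
/-- If all large subgraphs without small cutsets are `p`-colourable, then colourings of few
vertices of `G`, together with few forbidden colours elsewhere, extend to `p + 2k - 1` colours. -/
theorem exists_coloring_extending [DecidableEq V] {γ : Type*} [Fintype γ] [DecidableEq γ]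
    (G : SimpleGraph V) [DecidableRel G.Adj] (k p : ℕ) (hk : 1 ≤ k) (hkp : k ≤ p)
    (hγ : Fintype.card γ + 1 = p + 2 * k)
    (hG : ∀ s : Finset V, p + k < #s → NoSmallCutset G k s →
      (G.induce (s : Set V)).Colorable p)
    (U X : Finset V) (F : V → Finset γ) (φ : V → γ) (hUX : Disjoint U X)
    (hF : ∀ v ∈ U, #(F v) ≤ k) (hμ : ∑ v ∈ U, #(F v) + k * #X < 2 * k * k) :
    ∃ g : V → γ, (∀ v ∈ X, g v = φ v) ∧ (∀ v ∈ U, g v ∉ F v) ∧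
      ∀ u ∈ U, ∀ v ∈ U ∪ X, G.Adj u v → g u ≠ g v := by
  induction hN : 2 * k * #U + #X using Nat.strong_induction_on generalizing U X F φ with
  | _ N ih =>
  have hγ0 : Nonempty γ := Fintype.card_pos_iff.1 (by omega)
  have exists_fresh : ∀ s : Finset γ, #s < Fintype.card γ → ∃ β, β ∉ s := fun s hs => by
    by_contra! h
    rw [eq_univ_iff_forall.2 h, card_univ] at hs
    exact lt_irrefl _ hs
  have lt_two_mul : ∀ m, k * m < 2 * k * k → m < 2 * k := fun m hm =>
    Nat.lt_of_mul_lt_mul_left (a := k) (by rwa [Nat.mul_comm k (2 * k)])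
  have hdecr : ∀ U' X' : Finset V, #U' < #U → k * #X' < 2 * k * k → 2 * k * #U' + #X' < N := by
    intro U' X' hU' hX'
    have h1 : 2 * k * (#U' + 1) ≤ 2 * k * #U := Nat.mul_le_mul_left _ hU'
    have h2 := lt_two_mul _ hX'
    rw [Nat.mul_add, Nat.mul_one] at h1
    omega
  -- a vertex with many forbidden colours may be coloured at once
  by_cases hfull : ∃ v ∈ U, #(F v) = k
  · obtain ⟨v, hv, hvk⟩ := hfull
    have hsplit := add_sum_erase U (fun v => #(F v)) hv
    have hvX : v ∉ X := disjoint_left.1 hUX hv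
    have hX : #X + 1 < 2 * k := lt_two_mul _ (by rw [Nat.mul_add, Nat.mul_one]; omega)
    obtain ⟨β, hβ⟩ := exists_fresh (F v ∪ X.image φ) (by
      have h1 := card_union_le (F v) (X.image φ)
      have h2 : #(X.image φ) ≤ #X := card_image_le
      omega)
    simp only [mem_union, mem_image, not_or, not_exists, not_and] at hβ
    have hXc := card_insert_of_notMem hvX
    have hμ' : k * #(insert v X) < 2 * k * k := by rw [hXc]; nlinarith
    obtain ⟨g, hg1, hg2, hg3⟩ := ih _ (hdecr _ _ (card_erase_lt_of_mem hv) hμ') (U.erase v) (insert v X) F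
      (Function.update φ v β)
      (disjoint_left.2 fun u hu hu' => by
        rcases mem_insert.1 hu' with h | h
        · exact ne_of_mem_erase hu h
        · exact disjoint_left.1 hUX (mem_of_mem_erase hu) h)
      (fun u hu => hF u (mem_of_mem_erase hu)) (by rw [hXc]; nlinarith) rfl
    have hgv : g v = β := by simpa using hg1 v (mem_insert_self _ _)
    have hgX : ∀ u ∈ X, g u = φ u := fun u hu => by
      have huv : u ≠ v := fun h => hvX (h ▸ hu)
      simpa [huv] using hg1 u (mem_insert_of_mem hu)
    refine ⟨g, hgX, fun u hu => ?_, fun u hu w hw huw => ?_⟩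
    · rcases eq_or_ne u v with rfl | huv
      · rw [hgv]; exact hβ.1
      · exact hg2 u (mem_erase.2 ⟨huv, hu⟩)
    · rcases eq_or_ne u v with rfl | huv
      · rcases mem_union.1 hw with hw | hw
        · exact (hg3 w (mem_erase.2 ⟨huw.ne', hw⟩) u
            (mem_union_right _ (mem_insert_self _ _)) huw.symm).symm
        · rw [hgv, hgX w hw]
          exact fun h => hβ.2 w hw h.symm
      · refine hg3 u (mem_erase.2 ⟨huv, hu⟩) w ?_ huw
        simp only [mem_union, mem_erase, mem_insert] at hw ⊢
        tauto
  have hF' : ∀ v ∈ U, #(F v) < k := fun v hv =>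
    lt_of_le_of_ne (hF v hv) fun h => hfull ⟨v, hv, h⟩
  -- a precoloured vertex with few neighbours may be traded for forbidden colours
  by_cases hlow : ∃ x ∈ X, #{v ∈ U | G.Adj x v} ≤ k
  · obtain ⟨x, hx, hxk⟩ := hlow
    have hc := card_erase_add_one hx
    have hxU : x ∉ U := disjoint_right.1 hUX hx
    have hstep : ∀ v, #(if G.Adj x v then insert (φ x) (F v) else F v)
        ≤ #(F v) + if G.Adj x v then 1 else 0 := fun v => by
      split_ifs
      · exact card_insert_le _ _
      · simp
    obtain ⟨g, hg1, hg2, hg3⟩ := ih _ (by rw [← hN]; omega) U (X.erase x)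
      (fun v => if G.Adj x v then insert (φ x) (F v) else F v) φ
      (hUX.mono_right (erase_subset _ _))
      (fun v hv => by
        have h1 := hstep v
        have h2 := hF' v hv
        refine h1.trans ?_
        split_ifs <;> omega)
      (by
        have h1 := sum_le_sum fun v (_ : v ∈ U) => hstep v
        rw [sum_add_distrib, ← card_filter] at h1
        nlinarith) rfl
    refine ⟨Function.update g x (φ x), fun v hv => ?_, fun v hv => ?_, fun u hu w hw huw => ?_⟩
    · rcases eq_or_ne v x with rfl | hvx
      · simp
      · simpa [hvx] using hg1 v (mem_erase.2 ⟨hvx, hv⟩)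
    · have hvx : v ≠ x := fun h => hxU (h ▸ hv)
      have := hg2 v hv
      simp only [ne_eq, hvx, not_false_eq_true, Function.update_of_ne]
      split_ifs at this
      · exact fun h => this (mem_insert_of_mem h)
      · exact this
    · have hux : u ≠ x := fun h => hxU (h ▸ hu)
      rcases eq_or_ne w x with rfl | hwx
      · have := hg2 u hu
        rw [if_pos huw.symm] at this
        simp only [ne_eq, hux, not_false_eq_true, Function.update_of_ne, Function.update_self]
        exact fun h => this (h ▸ mem_insert_self _ _)
      · rw [Function.update_of_ne hux, Function.update_of_ne hwx]
        refine hg3 u hu w ?_ huw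
        simp only [mem_union, mem_erase] at hw ⊢
        tauto
  push Not at hlow
  -- a vertex with few constraints may be coloured last
  by_cases hdeg : ∃ v ∈ U, #(F v) + #{w ∈ U ∪ X | G.Adj v w} < Fintype.card γ
  · obtain ⟨v, hv, hvd⟩ := hdeg
    have hvX : v ∉ X := disjoint_left.1 hUX hv
    obtain ⟨g, hg1, hg2, hg3⟩ := ih _ (hdecr _ _ (card_erase_lt_of_mem hv)
        (lt_of_le_of_lt (Nat.le_add_left _ _) hμ)) (U.erase v) X F φ
      (hUX.mono_left (erase_subset _ _)) (fun u hu => hF u (mem_of_mem_erase hu))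
      (lt_of_le_of_lt (Nat.add_le_add_right
        (sum_le_sum_of_subset (erase_subset _ _)) _) hμ) rfl
    obtain ⟨β, hβ⟩ := exists_fresh (F v ∪ {w ∈ U ∪ X | G.Adj v w}.image g) (by
      have h1 := card_union_le (F v) ({w ∈ U ∪ X | G.Adj v w}.image g)
      have h2 : #({w ∈ U ∪ X | G.Adj v w}.image g) ≤ _ := card_image_le
      omega)
    simp only [mem_union, mem_image, mem_filter, not_or, not_exists, not_and] at hβ
    refine ⟨Function.update g v β, fun u hu => ?_, fun u hu => ?_, fun u hu w hw huw => ?_⟩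
    · have huv : u ≠ v := fun h => hvX (h ▸ hu)
      simpa [huv] using hg1 u hu
    · rcases eq_or_ne u v with rfl | huv
      · simpa using hβ.1
      · simpa [huv] using hg2 u (mem_erase.2 ⟨huv, hu⟩)
    · rcases eq_or_ne u v with rfl | huv
      · rw [Function.update_self, Function.update_of_ne huw.ne']
        exact fun h => hβ.2 w ⟨mem_union.1 hw, huw⟩ h.symm
      · rw [Function.update_of_ne huv]
        rcases eq_or_ne w v with rfl | hwv
        · rw [Function.update_self]
          exact hβ.2 u ⟨Or.inl hu, huw.symm⟩
        · rw [Function.update_of_ne hwv]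
          refine hg3 u (mem_erase.2 ⟨huv, hu⟩) w ?_ huw
          simp only [mem_union, mem_erase] at hw ⊢
          tauto
  push Not at hdeg
  rcases U.eq_empty_or_nonempty with rfl | ⟨v₀, hv₀⟩
  · exact ⟨φ, by simp, by simp, by simp⟩
  have hsize : p + k < #(U ∪ X) := by
    have h1 := hdeg v₀ hv₀
    have h2 := hF' v₀ hv₀
    have h3 : #{w ∈ U ∪ X | G.Adj v₀ w} < #(U ∪ X) :=
      card_lt_card (filter_ssubset.2 ⟨v₀, mem_union_left _ hv₀, G.irrefl⟩)
    omega
  by_cases hcut : NoSmallCutset G k (U ∪ X)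
  · obtain ⟨C⟩ := hG _ hsize hcut
    have hX : #X < 2 * k := lt_two_mul _ (lt_of_le_of_lt (Nat.le_add_left _ _) hμ)
    obtain ⟨e, he⟩ := Nat.exists_eq_add_of_lt hX
    obtain ⟨g, hg, hgc⟩ := exists_coloring_refining_classes F
      (fun v => if h : v ∈ U ∪ X then (C ⟨v, h⟩ : ℕ) else 0) U (range p)
      (univ \ X.image φ) e
      (fun v hv => by simp [hv])
      (by
        have h1 := le_card_sdiff (X.image φ) univ
        have h2 : #(X.image φ) ≤ #X := card_image_le
        rw [card_univ] at h1
        rw [card_range]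
        omega)
      (fun v hv => by rw [card_range]; exact (hF v hv).trans hkp)
      (fun _ => by
        rw [card_range]
        have h1 : (e + 1) * k ≤ (e + 1) * p := Nat.mul_le_mul_left _ hkp
        rw [he] at hμ
        nlinarith)
    have hUnX : ∀ u ∈ U, u ∉ X := fun u hu => disjoint_left.1 hUX hu
    refine ⟨fun v => if v ∈ X then φ v else g v, fun v hv => by simp [hv],
      fun v hv => by simpa [hUnX v hv] using (hg v hv).2, fun u hu w hw huw => ?_⟩
    simp only [hUnX u hu, if_false]
    by_cases hwX : w ∈ X
    · simp only [hwX, if_true]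
      intro h
      have := (hg u hu).1
      rw [h] at this
      exact (mem_sdiff.1 this).2 (mem_image_of_mem _ hwX)
    · simp only [hwX, if_false]
      have hwU : w ∈ U := (mem_union.1 hw).resolve_right hwX
      intro h
      have h1 := hgc u hu w hwU h
      simp only [mem_union, hu, hwU, true_or, dite_true] at h1
      exact C.valid (v := ⟨u, mem_union_left _ hu⟩) (w := ⟨w, mem_union_left _ hwU⟩) huw
        (Fin.val_injective h1)
  · -- colour everything outside the lighter side of the cut first
    have key : ∀ S A B : Finset V, S ∪ (A ∪ B) = U ∪ X → Disjoint S A → Disjoint S B →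
        Disjoint A B → #S ≤ k → A.Nonempty → B.Nonempty → (∀ a ∈ A, ∀ b ∈ B, ¬ G.Adj a b) →
        ∑ v ∈ U ∩ B, #(F v) + k * #(X ∩ B) < k * k →
        ∃ g : V → γ, (∀ v ∈ X, g v = φ v) ∧ (∀ v ∈ U, g v ∉ F v) ∧
          ∀ u ∈ U, ∀ v ∈ U ∪ X, G.Adj u v → g u ≠ g v := by
      intro S A B hSAB hSA hSB hAB hS hA hB hadj hlight
      have hmem : ∀ v, v ∈ U ∪ X ↔ v ∈ S ∨ v ∈ A ∨ v ∈ B := fun v => by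
        rw [← hSAB, mem_union, mem_union]
      have hUB : ∃ v ∈ U, v ∈ B := by
        obtain ⟨b, hb⟩ := hB
        rcases mem_union.1 ((hmem b).2 (by tauto)) with h | h
        · exact ⟨b, h, hb⟩
        · by_contra! hno
          refine absurd (hlow b h) (not_lt.2 ((card_le_card fun v hv => ?_).trans hS))
          rw [mem_filter] at hv
          rcases (hmem v).1 (mem_union_left _ hv.1) with h | h | h
          · exact h
          · exact absurd hv.2.symm (hadj v h b hb)
          · exact absurd h (hno v hv.1)
      have hUA : ∃ v ∈ U, v ∉ B := by
        obtain ⟨a, ha⟩ := hA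
        rcases mem_union.1 ((hmem a).2 (by tauto)) with h | h
        · exact ⟨a, h, disjoint_left.1 hAB ha⟩
        · obtain ⟨v, hv⟩ := card_pos.1 ((Nat.zero_le k).trans_lt (hlow a h))
          rw [mem_filter] at hv
          exact ⟨v, hv.1, fun hvB => hadj a ha v hvB hv.2⟩
      obtain ⟨g, hg1, hg2, hg3⟩ := ih _ (hdecr (U \ B) X (card_lt_card (by
          obtain ⟨v, hv, hvB⟩ := hUB
          exact (ssubset_iff_of_subset sdiff_subset).2
            ⟨v, hv, fun h => (mem_sdiff.1 h).2 hvB⟩))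
          (lt_of_le_of_lt (Nat.le_add_left _ _) hμ)) (U \ B) X F φ
        (hUX.mono_left sdiff_subset) (fun u hu => hF u (mem_sdiff.1 hu).1)
        (lt_of_le_of_lt (Nat.add_le_add_right
          (sum_le_sum_of_subset sdiff_subset) _) hμ) rfl
      have hμB : ∑ v ∈ U ∩ B, #(F v) + k * #(X ∩ B ∪ S) < 2 * k * k := by
        have h1 := Nat.mul_le_mul_left k ((card_union_le (X ∩ B) S).trans
          (Nat.add_le_add_left hS _))
        nlinarith
      obtain ⟨g', hg1', hg2', hg3'⟩ := ih _ (hdecr (U ∩ B) (X ∩ B ∪ S) (card_lt_card (by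
          obtain ⟨v, hv, hvB⟩ := hUA
          exact (ssubset_iff_of_subset inter_subset_left).2
            ⟨v, hv, fun h => hvB (mem_inter.1 h).2⟩))
          (lt_of_le_of_lt (Nat.le_add_left _ _) hμB)) (U ∩ B) (X ∩ B ∪ S) F g
        (disjoint_union_right.2 ⟨hUX.mono inter_subset_left inter_subset_left,
          hSB.symm.mono_left inter_subset_right⟩)
        (fun u hu => hF u (mem_inter.1 hu).1) hμB rfl
      -- a neighbour of the light side is either uncoloured there or already coloured by `g`
      have hcross : ∀ u ∈ U, u ∈ B → ∀ w ∈ U ∪ X, G.Adj u w →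
          g' u ≠ if w ∈ U ∩ B then g' w else g w := by
        intro u hu huB w hw huw
        have huUB := mem_inter.2 ⟨hu, huB⟩
        split_ifs with hwUB
        · exact hg3' u huUB w (mem_union_left _ hwUB) huw
        · have hw' : w ∈ X ∩ B ∪ S := by
            rcases (hmem w).1 hw with h | h | h
            · exact mem_union_right _ h
            · exact absurd huw.symm (hadj w h u huB)
            · refine mem_union_left _ (mem_inter.2 ⟨?_, h⟩)
              exact (mem_union.1 hw).resolve_left fun hwU => hwUB (mem_inter.2 ⟨hwU, h⟩)
          rw [← hg1' w hw']
          exact hg3' u huUB w (mem_union_right _ hw') huw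
      refine ⟨fun v => if v ∈ U ∩ B then g' v else g v, fun v hv => ?_, fun v hv => ?_,
        fun u hu w hw huw => ?_⟩
      · have : v ∉ U ∩ B := fun h => disjoint_right.1 hUX hv (mem_inter.1 h).1
        simpa only [this, if_false] using hg1 v hv
      · by_cases hvB : v ∈ B
        · simpa only [mem_inter, hv, hvB, and_self, if_true] using hg2' v (mem_inter.2 ⟨hv, hvB⟩)
        · simpa only [mem_inter, hvB, and_false, if_false] using hg2 v (mem_sdiff.2 ⟨hv, hvB⟩)
      · by_cases huB : u ∈ B
        · have := hcross u hu huB w hw huw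
          simpa only [mem_inter, hu, huB, and_self, if_true] using this
        · have huUB : u ∉ U ∩ B := fun h => huB (mem_inter.1 h).2
          by_cases hwUB : w ∈ U ∩ B
          · have := hcross w (mem_inter.1 hwUB).1 (mem_inter.1 hwUB).2 u
              (mem_union_left _ hu) huw.symm
            simp only [huUB, if_false] at this
            simpa only [huUB, hwUB, if_false, if_true] using this.symm
          · simp only [huUB, hwUB, if_false]
            refine hg3 u (mem_sdiff.2 ⟨hu, huB⟩) w ?_ huw
            simp only [mem_union, mem_sdiff, mem_inter] at hw hwUB ⊢
            tauto
    unfold NoSmallCutset at hcut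
    push Not at hcut
    obtain ⟨S, A, B, hSAB, hSA, hSB, hAB, hS, hA, hB, hadj⟩ := hcut
    have hU : ∑ v ∈ U ∩ A, #(F v) + ∑ v ∈ U ∩ B, #(F v) ≤ ∑ v ∈ U, #(F v) := by
      rw [← sum_union (hAB.mono inter_subset_right inter_subset_right)]
      exact sum_le_sum_of_subset (union_subset inter_subset_left inter_subset_left)
    have hX : #(X ∩ A) + #(X ∩ B) ≤ #X := by
      rw [← card_union_of_disjoint (hAB.mono inter_subset_right inter_subset_right)]
      exact card_le_card (union_subset inter_subset_left inter_subset_left)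
    have hkX := Nat.mul_le_mul_left k hX
    by_cases hlight : ∑ v ∈ U ∩ B, #(F v) + k * #(X ∩ B) < k * k
    · exact key S A B hSAB hSA hSB hAB hS hA hB hadj hlight
    · refine key S B A (by rw [union_comm B A, hSAB]) hSB hSA hAB.symm hS hB hA
        (fun b hb a ha h => hadj a ha b hb h.symm) ?_
      rw [not_lt] at hlight
      nlinarith

/-- An induced subgraph without small cutsets is highly connected. -/
theorem NoSmallCutset.kConnected [DecidableEq V] {G : SimpleGraph V} {k : ℕ} {s : Finset V}
    (hs : NoSmallCutset G k s) (hk : k + 1 < s.card) :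
    KConnected ((⊤ : G.Subgraph).induce (s : Set V)).coe (k + 1) := by
  classical
  refine ⟨by simpa using hk, ?_⟩
  rintro X hX ⟨A, B, hA, hB, hAB, hABX, hadj⟩
  have : Finite ((⊤ : G.Subgraph).induce (s : Set V)).verts := s.finite_toSet.to_subtype
  have : Fintype ((⊤ : G.Subgraph).induce (s : Set V)).verts := Fintype.ofFinite _
  have hdisj : ∀ P Q : Set ((⊤ : G.Subgraph).induce (s : Set V)).verts, Disjoint P Q →
      Disjoint (P.toFinset.image Subtype.val) (Q.toFinset.image Subtype.val) := by
    intro P Q h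
    rw [Finset.disjoint_image Subtype.val_injective, Set.disjoint_toFinset]
    exact h
  have hXAB : Disjoint X (A ∪ B) := hABX ▸ disjoint_compl_right
  rw [Set.disjoint_union_right] at hXAB
  have hcover : ∀ v, v ∈ X ∨ v ∈ A ∨ v ∈ B := fun v => by
    by_cases h : v ∈ X
    · exact Or.inl h
    · exact Or.inr (hABX.symm ▸ h : v ∈ A ∪ B)
  obtain ⟨a, ha, b, hb, hab⟩ := hs (X.toFinset.image Subtype.val) (A.toFinset.image Subtype.val)
    (B.toFinset.image Subtype.val)
    (by
      ext v
      simp only [Finset.mem_union, Finset.mem_image, Set.mem_toFinset]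
      constructor
      · rintro (⟨u, -, rfl⟩ | ⟨u, -, rfl⟩ | ⟨u, -, rfl⟩) <;> exact u.2
      · intro hv
        rcases hcover ⟨v, hv⟩ with h | h | h
        · exact Or.inl ⟨_, h, rfl⟩
        · exact Or.inr (Or.inl ⟨_, h, rfl⟩)
        · exact Or.inr (Or.inr ⟨_, h, rfl⟩))
    (hdisj _ _ hXAB.1) (hdisj _ _ hXAB.2) (hdisj _ _ hAB)
    (by
      rw [Finset.card_image_of_injective _ Subtype.val_injective, ← Set.ncard_eq_toFinset_card']
      omega)
    (by simpa using hA) (by simpa using hB)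
  simp only [Finset.mem_image, Set.mem_toFinset] at ha hb
  obtain ⟨a, ha, rfl⟩ := ha
  obtain ⟨b, hb, rfl⟩ := hb
  exact hadj a ha b hb ⟨a.2, b.2, hab⟩

/-- For every `k ≥ 1`, every graph `G` with `χ(G) ≥ 4k − 1` contains a `(k+1)`-connected
subgraph with more than `χ(G) − k` vertices and chromatic number at least
`χ(G) − 2k + 1`. -/
theorem conn_subgraph_4k [Fintype V] (k : ℕ) (hk : 1 ≤ k) (G : SimpleGraph V)
    (n : ℕ) (hn : G.chromaticNumber = n) (h4 : 4 * k - 1 ≤ n) :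
    ∃ H : G.Subgraph, KConnected H.coe (k + 1) ∧ n - k < Nat.card H.verts ∧
      ((n + 1 - 2 * k : ℕ) : ℕ∞) ≤ H.coe.chromaticNumber := by
  classical
  by_contra! hno
  have hcol : G.Colorable (n - 1) := by
    obtain ⟨g, -, -, hg⟩ := exists_coloring_extending (γ := Fin (n - 1)) G k (n - 2 * k) hk
      (by omega) (by rw [Fintype.card_fin]; omega)
      (fun s hs hcut => by
        have h := hno _ (hcut.kConnected (by omega)) (by
          have : Nat.card ((⊤ : G.Subgraph).induce (s : Set V)).verts = s.card := by simp
          omega)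
        rw [← SimpleGraph.induce_eq_coe_induce_top] at h
        rw [← SimpleGraph.chromaticNumber_le_iff_colorable]
        have hsucc : n + 1 - 2 * k = n - 2 * k + 1 := by omega
        rw [hsucc, Nat.cast_add, Nat.cast_one] at h
        exact ENat.lt_natCast_add_one_iff.1 h)
      Finset.univ ∅ (fun _ => ∅) (fun _ => ⟨0, by omega⟩) (by simp) (by simp) (by
        simp; omega)
    exact ⟨SimpleGraph.Coloring.mk g fun {u v} huv => hg u (by simp) v (by simp) huv⟩
  have := SimpleGraph.chromaticNumber_le_iff_colorable.2 hcol
  rw [hn, Nat.cast_le] at this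
  omega
end

section
/- For every integer k ≥ 1, every graph G with chromatic number χ(G) ≥ (3 + 1/16)k contains a (k+1)-connected subgraph with more than χ(G) − k vertices and chromatic number at least χ(G) − 2k + 2. -/
variable {V : Type*}

section Helpers

open Finset
open scoped Classical

/-- Colour-class assignment: the classes of `h` can be refined into parts which receive distinct
colours from `C`, no vertex of `A` receiving a colour forbidden by `R`, provided each vertex has
fewer than `K` forbidden colours and the total number of forbidden pairs is small. -/
theorem exists_refined_assignment {α β ι : Type*} [Nonempty β] {K : ℕ} (R : α → β → Prop)
    (h : α → ι) (L : Finset ι) (hKL : K ≤ #L) (C : Finset β) :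
    ∀ A : Finset α, (∀ u ∈ A, h u ∈ L) → (∀ u ∈ A, #{j ∈ C | R u j} < K) →
      ∑ u ∈ A, #{j ∈ C | R u j} + K * #L < K * (#C + 1) →
      ∃ g : α → β, ∀ u ∈ A, g u ∈ C ∧ ¬ R u (g u) ∧ ∀ v ∈ A, g u = g v → h u = h v := by
  induction C using Finset.strongInduction with
  | H C ih =>
  intro A hL hK hsum
  have hsub : ∀ (j : β) (u : α), #{i ∈ C.erase j | R u i} ≤ #{i ∈ C | R u i} := fun j u =>
    card_le_card (filter_subset_filter _ (erase_subset _ _))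
  by_cases hheavy : ∃ j ∈ C, K ≤ #{u ∈ A | R u j}
  · obtain ⟨j, hj, hjK⟩ := hheavy
    have hsplit : ∑ u ∈ A, #{i ∈ C.erase j | R u i} + #{u ∈ A | R u j}
        = ∑ u ∈ A, #{i ∈ C | R u i} := by
      rw [card_filter, ← sum_add_distrib]
      refine sum_congr rfl fun u _ => ?_
      rw [card_filter, card_filter, ← add_sum_erase C _ hj, add_comm]
    have hc := card_erase_add_one hj
    obtain ⟨g, hg⟩ := ih (C.erase j) (erase_ssubset hj) A hL
      (fun u hu => (hsub j u).trans_lt (hK u hu)) (by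
        rw [← hc] at hsum
        nlinarith)
    exact ⟨g, fun u hu => ⟨mem_of_mem_erase (hg u hu).1, (hg u hu).2⟩⟩
  by_cases hgroup : ∃ U ⊆ A, ∃ j ∈ C, (∀ u ∈ U, ¬ R u j) ∧ (∀ u ∈ U, ∀ v ∈ U, h u = h v) ∧
      K ≤ ∑ u ∈ U, #{i ∈ C | R u i}
  · obtain ⟨U, hUA, j, hj, hUj, hUh, hUK⟩ := hgroup
    have hc := card_erase_add_one hj
    obtain ⟨g, hg⟩ := ih (C.erase j) (erase_ssubset hj) (A \ U)
      (fun u hu => hL u (sdiff_subset hu))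
      (fun u hu => (hsub j u).trans_lt (hK u (sdiff_subset hu))) (by
        have h1 : ∑ u ∈ A \ U, #{i ∈ C.erase j | R u i} ≤ ∑ u ∈ A \ U, #{i ∈ C | R u i} :=
          sum_le_sum fun u _ => hsub j u
        have h2 := sum_sdiff (f := fun u => #{i ∈ C | R u i}) hUA
        rw [← hc] at hsum
        nlinarith)
    have hne : ∀ v ∈ A, v ∉ U → g v ≠ j := fun v hv hvU =>
      ne_of_mem_erase (hg v (mem_sdiff.2 ⟨hv, hvU⟩)).1
    refine ⟨fun u => if u ∈ U then j else g u, fun u hu => ?_⟩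
    by_cases huU : u ∈ U
    · simp only [huU, if_true]
      refine ⟨hj, hUj u huU, fun v hv hvj => ?_⟩
      by_cases hvU : v ∈ U
      · exact hUh u huU v hvU
      · rw [if_neg hvU] at hvj
        exact absurd hvj.symm (hne v hv hvU)
    · simp only [huU, if_false]
      have hgu := hg u (mem_sdiff.2 ⟨hu, huU⟩)
      refine ⟨mem_of_mem_erase hgu.1, hgu.2.1, fun v hv hvj => ?_⟩
      by_cases hvU : v ∈ U
      · rw [if_pos hvU] at hvj
        exact absurd hvj (hne u hu huU)
      · rw [if_neg hvU] at hvj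
        exact hgu.2.2 v (mem_sdiff.2 ⟨hv, hvU⟩) hvj
  push Not at hheavy hgroup
  -- a partition of the classes into as few parts as possible, each with fewer than `K` pairs
  let good : (α → α) → Prop := fun b => (∀ u ∈ A, ∀ v ∈ A, b u = b v → h u = h v) ∧
    ∀ i, ∑ u ∈ A with b u = i, #{j ∈ C | R u j} < K
  have hK0 : 0 < K := Nat.pos_of_mul_pos_right (lt_of_le_of_lt (Nat.zero_le _) hsum)
  have hgood : ∃ t, ∃ b, good b ∧ #(A.image b) = t := by
    refine ⟨_, id, ⟨fun u _ v _ huv => congrArg h huv, fun i => ?_⟩, rfl⟩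
    by_cases hi : i ∈ A
    · refine lt_of_le_of_lt (sum_le_sum_of_subset (t := {i})
        fun u hu => by simpa using (mem_filter.1 hu).2) (by simpa using hK i hi)
    · rw [filter_eq_empty_iff.2 fun u hu (hui : id u = i) => hi (hui ▸ hu)]
      simpa using hK0
  obtain ⟨b, ⟨hbh, hbK⟩, hbt⟩ := Nat.find_spec hgood
  have hbmin : ∀ b', good b' → #(A.image b) ≤ #(A.image b') := fun b' hb' =>
    hbt.le.trans (Nat.find_min' hgood ⟨b', hb', rfl⟩)
  have hLC : #L ≤ #C := by
    have : K * #L < K * (#C + 1) := by omega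
    exact Nat.lt_succ_iff.1 (Nat.lt_of_mul_lt_mul_left this)
  let T := A.image b
  let allowed : α → Finset β := fun i => {j ∈ C | ∀ u ∈ A, b u = i → ¬ R u j}
  have hallowed : ∀ i, #C ≤ #(allowed i) + ∑ u ∈ A with b u = i, #{j ∈ C | R u j} := by
    intro i
    have hcov : C ⊆ allowed i ∪ ({u ∈ A | b u = i}).biUnion fun u => {j ∈ C | R u j} := by
      intro j hj
      by_cases hji : j ∈ allowed i
      · exact mem_union_left _ hji
      · simp only [allowed, mem_filter, not_and, not_forall, not_not] at hji
        obtain ⟨u, hu, hui, hR⟩ := hji hj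
        exact mem_union_right _ (mem_biUnion.2 ⟨u, by simp [hu, hui], by simp [hj, hR]⟩)
    exact (card_le_card hcov).trans ((card_union_le _ _).trans
      (Nat.add_le_add_left card_biUnion_le _))
  have hfib : ∑ i ∈ T, ∑ u ∈ A with b u = i, #{j ∈ C | R u j} = ∑ u ∈ A, #{j ∈ C | R u j} :=
    sum_fiberwise_of_maps_to (fun u hu => mem_image_of_mem b hu) _
  have hone : ∀ j ∈ C, #{i ∈ T | j ∈ allowed i} ≤ #L := by
    intro j hj
    have hrep : ∀ i ∈ T, ∃ u ∈ A, b u = i := fun i hi => mem_image.1 hi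
    choose! r hr hbr using hrep
    refine card_le_card_of_injOn (fun i => h (r i))
      (fun i hi => hL _ (hr i (mem_filter.1 hi).1)) ?_
    intro i hi i' hi' hii
    by_contra hne
    obtain ⟨hiT, hij⟩ := mem_filter.1 hi
    obtain ⟨hiT', hij'⟩ := mem_filter.1 hi'
    simp only [allowed, mem_filter] at hij hij'
    have hall : ∀ u ∈ A, (b u = i ∨ b u = i') → h u = h (r i) := by
      rintro u hu (hbu | hbu)
      · exact hbh u hu _ (hr i hiT) (hbu.trans (hbr i hiT).symm)
      · exact (hbh u hu _ (hr i' hiT') (hbu.trans (hbr i' hiT').symm)).trans hii.symm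
    have hlt := hgroup {u ∈ A | b u = i ∨ b u = i'} (filter_subset _ _) j hj
      (fun u hu => by
        obtain ⟨hu, hbu | hbu⟩ := mem_filter.1 hu
        · exact hij.2 u hu hbu
        · exact hij'.2 u hu hbu)
      (fun u hu v hv => by
        rw [mem_filter] at hu hv
        rw [hall u hu.1 hu.2, hall v hv.1 hv.2])
    let b' : α → α := fun u => if b u = i' then i else b u
    have hb' : good b' := by
      refine ⟨fun u hu v hv huv => ?_, fun l => ?_⟩
      · simp only [b'] at huv
        split_ifs at huv with h1 h2 h2
        · rw [hall u hu (Or.inr h1), hall v hv (Or.inr h2)]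
        · rw [hall u hu (Or.inr h1), hall v hv (Or.inl huv.symm)]
        · rw [hall u hu (Or.inl huv), hall v hv (Or.inr h2)]
        · exact hbh u hu v hv huv
      · by_cases hl : l = i
        · subst hl
          refine lt_of_le_of_lt (sum_le_sum_of_subset ?_) hlt
          intro u hu
          simp only [b', mem_filter] at hu ⊢
          refine ⟨hu.1, ?_⟩
          by_cases h1 : b u = i'
          · exact Or.inr h1
          · exact Or.inl (by simpa [h1] using hu.2)
        · refine lt_of_le_of_lt (sum_le_sum_of_subset ?_) (hbK l)
          intro u hu
          simp only [b', mem_filter] at hu ⊢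
          refine ⟨hu.1, ?_⟩
          by_cases h1 : b u = i'
          · exact absurd (by simpa [h1] using hu.2.symm) hl
          · simpa [h1] using hu.2
    have himg : A.image b' ⊆ T.erase i' := by
      intro l hl
      obtain ⟨u, hu, rfl⟩ := mem_image.1 hl
      simp only [b']
      split_ifs with h1
      · exact mem_erase.2 ⟨hne, hiT⟩
      · exact mem_erase.2 ⟨h1, mem_image_of_mem b hu⟩
    have := (hbmin b' hb').trans (card_le_card himg)
    have h2 := card_erase_add_one hiT'
    simp only [T] at h2 this
    omega
  have hTC : #T ≤ #C := by
    have h1 : ∑ i ∈ T, #(allowed i) = ∑ j ∈ C, #{i ∈ T | j ∈ allowed i} := by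
      have : ∀ i, allowed i = {j ∈ C | j ∈ allowed i} := fun i => by
        ext j; simp [allowed]
      rw [sum_congr rfl fun i _ => congrArg card (this i)]
      exact sum_card_bipartiteAbove_eq_sum_card_bipartiteBelow fun i j => j ∈ allowed i
    have h2 : ∑ j ∈ C, #{i ∈ T | j ∈ allowed i} ≤ #C * #L := by
      simpa using sum_le_sum hone
    have h3 : #T * #C ≤ ∑ i ∈ T, #(allowed i) + ∑ u ∈ A, #{j ∈ C | R u j} := by
      rw [← hfib, ← sum_add_distrib]
      simpa using sum_le_sum fun i (_ : i ∈ T) => hallowed i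
    by_contra! hlt
    obtain ⟨d, hd⟩ := Nat.exists_eq_add_of_le hLC
    have h4 : (#C + 1) * #C ≤ #T * #C := Nat.mul_le_mul_right _ hlt
    have hKC : K ≤ #C := hKL.trans hLC
    have h5 : K * (d + 1) ≤ #C * (d + 1) := Nat.mul_le_mul_right _ hKC
    nlinarith
  have hhall : ∀ I : Finset T, #I ≤ #(I.biUnion fun i => allowed i) := by
    intro I
    by_contra! hlt
    set B := I.biUnion fun i => allowed i with hB
    have hBC : B ⊆ C := biUnion_subset.2 fun i _ => filter_subset _ _
    have hIT : #I ≤ #T := by simpa using card_le_univ I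
    have hJ := card_sdiff_add_card_eq_card hBC
    have hseen : ∀ j ∈ C \ B, ∀ i ∈ I, ∃ u ∈ A, b u = i ∧ R u j := by
      intro j hj i hi
      rw [mem_sdiff] at hj
      by_contra! hno
      exact hj.2 (mem_biUnion.2 ⟨i, hi, mem_filter.2 ⟨hj.1, fun u hu hbu => hno u hu hbu⟩⟩)
    obtain ⟨j₀, hj₀⟩ : (C \ B).Nonempty := card_pos.1 (by omega)
    have hIK : #I < K := by
      refine lt_of_le_of_lt ?_ (hheavy j₀ (sdiff_subset hj₀))
      rw [← card_image_of_injective I Subtype.val_injective]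
      refine (card_le_card (t := {u ∈ A | R u j₀}.image b) fun l hl => ?_).trans card_image_le
      obtain ⟨i, hi, rfl⟩ := mem_image.1 hl
      obtain ⟨u, hu, hbu, hR⟩ := hseen j₀ hj₀ i hi
      exact mem_image.2 ⟨u, mem_filter.2 ⟨hu, hR⟩, hbu⟩
    have hload : ∀ i ∈ I, #(C \ B) ≤ ∑ u ∈ A with b u = i, #{j ∈ C | R u j} := by
      intro i hi
      refine (card_le_card (t := ({u ∈ A | b u = i}).biUnion fun u => {j ∈ C | R u j}) ?_).trans
        card_biUnion_le
      intro j hj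
      obtain ⟨u, hu, hbu, hR⟩ := hseen j hj i hi
      exact mem_biUnion.2 ⟨u, by simp [hu, hbu], by simp [sdiff_subset hj, hR]⟩
    obtain ⟨i₀, hi₀⟩ : I.Nonempty := card_pos.1 (by omega)
    have hJK : #(C \ B) < K := (hload i₀ hi₀).trans_lt (hbK i₀)
    have htot : #I * #(C \ B) ≤ ∑ u ∈ A, #{j ∈ C | R u j} := by
      rw [← hfib, ← sum_coe_sort T]
      calc #I * #(C \ B) = ∑ i ∈ I, #(C \ B) := by simp
        _ ≤ ∑ i ∈ I, ∑ u ∈ A with b u = i, #{j ∈ C | R u j} := sum_le_sum hload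
        _ ≤ _ := sum_le_sum_of_subset (subset_univ I)
    obtain ⟨x, hx⟩ := Nat.exists_eq_add_of_lt hIK
    obtain ⟨y, hy⟩ := Nat.exists_eq_add_of_lt hJK
    have hIJ : #C + 1 ≤ #I + #(C \ B) := by omega
    have h1 : K * K ≤ K * #L := Nat.mul_le_mul_left _ hKL
    have h2 : K * (#C + 1) ≤ K * (#I + #(C \ B)) := Nat.mul_le_mul_left _ hIJ
    have h3 : K * (#I + #(C \ B)) ≤ #I * #(C \ B) + K * K := by
      zify
      have hx' : (K : ℤ) - #I ≥ 0 := by omega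
      have hy' : (K : ℤ) - #(C \ B) ≥ 0 := by omega
      nlinarith [mul_nonneg hx' hy']
    omega
  obtain ⟨f, hfinj, hf⟩ :=
    (Finset.all_card_le_biUnion_card_iff_exists_injective fun i : T => allowed i).1 hhall
  refine ⟨fun u => if hu : u ∈ A then f ⟨b u, mem_image_of_mem b hu⟩ else Classical.arbitrary β,
    fun u hu => ?_⟩
  have hfu := mem_filter.1 (hf ⟨b u, mem_image_of_mem b hu⟩)
  simp only [hu, dif_pos]
  refine ⟨hfu.1, hfu.2 u hu rfl, fun v hv huv => ?_⟩
  rw [dif_pos hv] at huv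
  exact hbh u hu v hv (congrArg Subtype.val (hfinj huv))

/-- The number of neighbours of `v` in `A`. -/
noncomputable def degIn (G : SimpleGraph V) (A : Finset V) (v : V) : ℕ :=
  #{u ∈ A | G.Adj v u}

theorem degIn_le_card (G : SimpleGraph V) (A : Finset V) (v : V) : degIn G A v ≤ #A :=
  card_filter_le _ _

theorem degIn_lt_card {G : SimpleGraph V} {A : Finset V} {v : V} (hv : v ∈ A) :
    degIn G A v < #A :=
  card_lt_card (filter_ssubset.2 ⟨v, hv, G.irrefl⟩)

theorem degIn_mono (G : SimpleGraph V) {A B : Finset V} (h : A ⊆ B) (v : V) :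
    degIn G A v ≤ degIn G B v :=
  card_le_card (filter_subset_filter _ h)

theorem degIn_union_le (G : SimpleGraph V) (A B : Finset V) (v : V) :
    degIn G (A ∪ B) v ≤ degIn G A v + degIn G B v := by
  rw [degIn, filter_union]
  exact card_union_le _ _

theorem degIn_union_of_disjoint (G : SimpleGraph V) {A B : Finset V} (h : Disjoint A B) (v : V) :
    degIn G (A ∪ B) v = degIn G A v + degIn G B v := by
  rw [degIn, filter_union]
  exact card_union_of_disjoint (disjoint_filter_filter h)

theorem degIn_eq_zero {G : SimpleGraph V} {A : Finset V} {v : V} (h : ∀ u ∈ A, ¬ G.Adj v u) :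
    degIn G A v = 0 :=
  card_eq_zero.2 (filter_eq_empty_iff.2 fun u hu => h u hu)

theorem sum_degIn_comm (G : SimpleGraph V) (A B : Finset V) :
    ∑ v ∈ B, degIn G A v = ∑ u ∈ A, degIn G B u := by
  simp only [degIn, card_filter]
  rw [sum_comm]
  simp only [G.adj_comm]

/-- `G` restricted to `S` has a proper colouring with `m` colours. -/
def ColorableOn (G : SimpleGraph V) (S : Finset V) (m : ℕ) : Prop :=
  ∃ f : V → ℕ, (∀ v ∈ S, f v < m) ∧ ∀ u ∈ S, ∀ v ∈ S, G.Adj u v → f u ≠ f v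

theorem exists_critical {G : SimpleGraph V} {m : ℕ} (S : Finset V) (hS : ¬ ColorableOn G S m) :
    ∃ T, ¬ ColorableOn G T m ∧ ∀ B ⊂ T, ColorableOn G B m := by
  induction S using Finset.strongInduction with
  | H S ih =>
  by_cases h : ∀ B ⊂ S, ColorableOn G B m
  · exact ⟨S, hS, h⟩
  · push Not at h
    obtain ⟨B, hB, hBm⟩ := h
    exact ih B hB hBm

theorem le_degIn_of_critical {G : SimpleGraph V} {m : ℕ} {S : Finset V}
    (hS : ¬ ColorableOn G S m) (hcrit : ∀ B ⊂ S, ColorableOn G B m) {u : V} (hu : u ∈ S) :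
    m ≤ degIn G S u := by
  by_contra! hlt
  obtain ⟨f, hfm, hf⟩ := hcrit _ (erase_ssubset hu)
  obtain ⟨c, hc, hcf⟩ := exists_mem_notMem_of_card_lt_card
    (s := {v ∈ S | G.Adj u v}.image f) (t := range m)
    (card_image_le.trans_lt (by rw [card_range]; exact hlt))
  refine hS ⟨fun v => if v = u then c else f v, fun v hv => ?_, fun v hv w hw hvw => ?_⟩
  · dsimp only
    split_ifs with h
    · exact mem_range.1 hc
    · exact hfm v (mem_erase.2 ⟨h, hv⟩)
  · dsimp only
    split_ifs with h1 h2 h2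
    · exact absurd (h1.trans h2.symm) hvw.ne
    · rintro rfl
      exact hcf (mem_image.2 ⟨w, mem_filter.2 ⟨hw, h1 ▸ hvw⟩, rfl⟩)
    · rintro rfl
      exact hcf (mem_image.2 ⟨v, mem_filter.2 ⟨hv, h2 ▸ hvw.symm⟩, rfl⟩)
    · exact hf v (mem_erase.2 ⟨h1, hv⟩) w (mem_erase.2 ⟨h2, hw⟩) hvw

/-- The number of edges leaving `A` inside `S`, where each outer vertex counts at most `k`. -/
noncomputable def boundaryWeight (G : SimpleGraph V) (S : Finset V) (k : ℕ) (A : Finset V) : ℕ :=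
  ∑ v ∈ S \ A, min k (degIn G A v)

/-- `S` is partitioned into a set `A`, minimal among the sets of size at least `k` and of boundary
weight less than `2 * k * k`, the set `X` of outer vertices with more than `k` neighbours in `A`,
and the set `D` of the remaining outer vertices. -/
structure IsCore (G : SimpleGraph V) (S : Finset V) (k : ℕ) (A X D : Finset V) : Prop where
  disjoint_AX : Disjoint A X
  disjoint_AD : Disjoint A D
  disjoint_XD : Disjoint X D
  union_eq : A ∪ X ∪ D = S
  lt_card : k < #A
  lt_degIn : ∀ v ∈ X, k < degIn G A v
  degIn_lt : ∀ u ∈ A, degIn G D u < k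
  weight_lt : k * #X + ∑ v ∈ D, degIn G A v < 2 * k * k
  minimal : ∀ B ⊂ A, k ≤ #B → 2 * k * k ≤ boundaryWeight G S k B

theorem boundaryWeight_erase_le (G : SimpleGraph V) {S A D : Finset V} {k : ℕ} {u : V}
    (hAS : A ⊆ S) (hu : u ∈ A) (hD : D ⊆ S \ A) (hDk : ∀ v ∈ D, degIn G A v ≤ k) :
    boundaryWeight G S k (A.erase u) + degIn G D u ≤ k + boundaryWeight G S k A := by
  have hins : S \ A.erase u = insert u (S \ A) := by
    rw [sdiff_erase (hAS hu)]
  have huS : u ∉ S \ A := by simp [hu]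
  have hdeg : degIn G D u = ∑ v ∈ S \ A, if v ∈ D ∧ G.Adj u v then 1 else 0 := by
    rw [← card_filter, degIn]
    congr 1
    ext v
    simp only [mem_filter]
    exact ⟨fun h => ⟨hD h.1, h⟩, fun h => h.2⟩
  have hterm : ∀ v, degIn G A v = degIn G (A.erase u) v + if G.Adj u v then 1 else 0 := by
    intro v
    rw [degIn, degIn, card_filter, card_filter, ← add_sum_erase A _ hu, add_comm]
    simp only [G.adj_comm]
  unfold boundaryWeight
  rw [hins, sum_insert huS, hdeg, add_assoc, ← sum_add_distrib]
  refine Nat.add_le_add (min_le_left _ _) (sum_le_sum fun v _ => ?_)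
  have h1 := hterm v
  by_cases hvD : v ∈ D
  · have h2 := hDk v hvD
    simp only [hvD, true_and]
    split_ifs at h1 ⊢ <;> omega
  · simp only [hvD, false_and, if_false]
    omega

theorem exists_isCore {G : SimpleGraph V} {S : Finset V} {m k : ℕ} (hS : S.Nonempty)
    (hm : 3 * k ≤ m) (hk : 1 ≤ k) (hdeg : ∀ u ∈ S, m ≤ degIn G S u) :
    ∃ A X D, IsCore G S k A X D := by
  let valid : Finset V → Prop := fun A => A ⊆ S ∧ k ≤ #A ∧ boundaryWeight G S k A < 2 * k * k
  have hkk : 0 < k * k := Nat.mul_pos hk hk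
  have hvS : valid S := by
    obtain ⟨u, hu⟩ := hS
    have := (hdeg u hu).trans (degIn_le_card G S u)
    refine ⟨Subset.rfl, by omega, ?_⟩
    simp only [boundaryWeight, sdiff_self, bot_eq_empty, sum_empty]
    nlinarith
  obtain ⟨A, ⟨⟨hAS, hAk, hAw⟩, hAmin⟩⟩ : ∃ A, Minimal valid A :=
    exists_minimal_of_wellFoundedLT valid ⟨S, hvS⟩
  have hmin : ∀ B ⊂ A, k ≤ #B → 2 * k * k ≤ boundaryWeight G S k B := by
    intro B hB hBk
    by_contra! hlt
    exact hB.2 (hAmin ⟨hB.1.trans hAS, hBk, hlt⟩ hB.1)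
  have hlt : k < #A := by
    refine lt_of_le_of_ne hAk fun hkA => hAw.not_ge ?_
    have h1 : boundaryWeight G S k A = ∑ u ∈ A, degIn G (S \ A) u := by
      rw [← sum_degIn_comm]
      exact sum_congr rfl fun v _ => min_eq_right (hkA ▸ degIn_le_card G A v)
    have h2 : ∀ u ∈ A, 2 * k ≤ degIn G (S \ A) u := by
      intro u hu
      have h3 := hdeg u (hAS hu)
      have h4 := degIn_union_le G A (S \ A) u
      rw [union_sdiff_of_subset hAS] at h4
      have h5 := degIn_le_card G A u
      omega
    have h6 := sum_le_sum h2
    rw [sum_const, ← hkA, smul_eq_mul] at h6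
    rw [h1]
    linarith
  refine ⟨A, {v ∈ S \ A | k < degIn G A v}, {v ∈ S \ A | ¬ k < degIn G A v},
    disjoint_sdiff.mono_right (filter_subset _ _), disjoint_sdiff.mono_right (filter_subset _ _),
    disjoint_filter_filter_not _ _ _, ?_, hlt, fun v hv => (mem_filter.1 hv).2, ?_, ?_, hmin⟩
  · rw [union_assoc, filter_union_filter_not_eq, union_sdiff_of_subset hAS]
  · intro u hu
    by_contra hge
    have h1 := boundaryWeight_erase_le G hAS hu (filter_subset (fun v => ¬ k < degIn G A v) _)
      fun v hv => not_lt.1 (mem_filter.1 hv).2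
    have h2 := hmin _ (erase_ssubset hu) (by rw [card_erase_of_mem hu]; omega)
    omega
  · refine lt_of_eq_of_lt ?_ hAw
    rw [boundaryWeight, ← sum_filter_add_sum_filter_not (S \ A) (fun v => k < degIn G A v)]
    congr 1
    · rw [sum_congr rfl fun v hv => min_eq_left (mem_filter.1 hv).2.le]
      simp [mul_comm]
    · exact sum_congr rfl fun v hv => (min_eq_right (not_lt.1 (mem_filter.1 hv).2)).symm

theorem IsCore.le_add_of_mem {G : SimpleGraph V} {S A X D Z P Q : Finset V} {k m : ℕ}
    (hc : IsCore G S k A X D) (hdeg : ∀ u ∈ S, m ≤ degIn G S u) (hcov : A ∪ X = Z ∪ P ∪ Q)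
    (hPQ : ∀ u ∈ P, ∀ v ∈ Q, ¬ G.Adj u v) {u : V} (hu : u ∈ P ∩ A) :
    m + 1 ≤ #Z + #(P ∩ X) + #(P ∩ A) + degIn G D u := by
  have huP := mem_inter.1 hu
  have hS : S = Z ∪ (P ∩ X) ∪ (P ∩ A) ∪ D ∪ Q ∩ (A ∪ X) := by
    rw [← hc.union_eq]
    ext v
    have := congrArg (v ∈ ·) hcov
    simp only [mem_union, mem_inter, eq_iff_iff] at this ⊢
    tauto
  have h0 : degIn G (Q ∩ (A ∪ X)) u = 0 :=
    degIn_eq_zero fun v hv => hPQ u huP.1 v (mem_inter.1 hv).1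
  have h1 := hdeg u (by rw [← hc.union_eq]; simp [huP.2])
  rw [hS] at h1
  have h2 := degIn_union_le G (Z ∪ (P ∩ X) ∪ (P ∩ A) ∪ D) (Q ∩ (A ∪ X)) u
  have h3 := degIn_union_le G (Z ∪ (P ∩ X) ∪ (P ∩ A)) D u
  have h4 := degIn_union_le G (Z ∪ (P ∩ X)) (P ∩ A) u
  have h5 := degIn_union_le G Z (P ∩ X) u
  have h6 := degIn_le_card G Z u
  have h7 := degIn_le_card G (P ∩ X) u
  have h8 := degIn_lt_card (G := G) hu
  omega

theorem IsCore.two_mul_le_of_separation {G : SimpleGraph V} {S A X D Z P Q : Finset V} {k m : ℕ}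
    (hc : IsCore G S k A X D) (hdeg : ∀ u ∈ S, m ≤ degIn G S u) (hm : 3 * k ≤ m)
    (hcov : A ∪ X = Z ∪ P ∪ Q) (hdisj : Disjoint P Q)
    (hPQ : ∀ u ∈ P, ∀ v ∈ Q, ¬ G.Adj u v) (hPA : (P ∩ A).Nonempty) (hQA : (Q ∩ A).Nonempty) :
    2 * k * k ≤ k * #Z + k * #(P ∩ X) + ∑ v ∈ D, degIn G (P ∩ A) v := by
  by_contra! hlt
  have hss : P ∩ A ⊂ A := by
    refine Finset.ssubset_iff_subset_ne.2 ⟨inter_subset_right, fun h => ?_⟩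
    obtain ⟨v, hv⟩ := hQA
    rw [mem_inter] at hv
    exact disjoint_left.1 hdisj (mem_inter.1 (h.symm ▸ hv.2)).1 hv.1
  have hw : boundaryWeight G S k (P ∩ A) ≤
      k * #Z + k * #(P ∩ X) + ∑ v ∈ D, degIn G (P ∩ A) v := by
    have hsub : S \ (P ∩ A) ⊆ Z ∪ P ∩ X ∪ Q ∪ D := by
      rw [← hc.union_eq]
      intro v
      have := congrArg (v ∈ ·) hcov
      simp only [mem_union, mem_inter, mem_sdiff, eq_iff_iff] at this ⊢
      tauto
    have hun : ∀ (B C : Finset V) (f : V → ℕ), ∑ v ∈ B ∪ C, f v ≤ ∑ v ∈ B, f v + ∑ v ∈ C, f v :=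
      fun B C f => by rw [← sum_union_inter]; exact Nat.le_add_right _ _
    have hk : ∀ B : Finset V, ∑ v ∈ B, min k (degIn G (P ∩ A) v) ≤ k * #B := fun B =>
      (sum_le_sum fun v _ => min_le_left _ _).trans (by simp [mul_comm])
    have hQ : ∑ v ∈ Q, min k (degIn G (P ∩ A) v) = 0 := sum_eq_zero fun v hv => by
      rw [degIn_eq_zero fun u hu h => hPQ u (mem_inter.1 hu).1 v hv h.symm, Nat.min_zero]
    have hD : ∑ v ∈ D, min k (degIn G (P ∩ A) v) ≤ ∑ v ∈ D, degIn G (P ∩ A) v :=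
      sum_le_sum fun v _ => min_le_right _ _
    have h1 := sum_le_sum_of_subset (f := fun v => min k (degIn G (P ∩ A) v)) hsub
    have h2 := hun (Z ∪ P ∩ X ∪ Q) D fun v => min k (degIn G (P ∩ A) v)
    have h3 := hun (Z ∪ P ∩ X) Q fun v => min k (degIn G (P ∩ A) v)
    have h4 := hun Z (P ∩ X) fun v => min k (degIn G (P ∩ A) v)
    have h5 := hk Z
    have h6 := hk (P ∩ X)
    unfold boundaryWeight
    linarith
  have ha : #(P ∩ A) < k := by
    by_contra! hge
    exact (hc.minimal _ hss hge).not_gt (hw.trans_lt hlt)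
  have hu : ∀ u ∈ P ∩ A, m + 1 ≤ #Z + #(P ∩ X) + #(P ∩ A) + degIn G D u := fun u hu =>
    hc.le_add_of_mem hdeg hcov hPQ hu
  have hsum : #(P ∩ A) * (m + 1) ≤
      #(P ∩ A) * (#Z + #(P ∩ X) + #(P ∩ A)) + ∑ v ∈ D, degIn G (P ∩ A) v := by
    rw [sum_degIn_comm]
    calc #(P ∩ A) * (m + 1) = ∑ u ∈ P ∩ A, (m + 1) := by simp
      _ ≤ ∑ u ∈ P ∩ A, (#Z + #(P ∩ X) + #(P ∩ A) + degIn G D u) := sum_le_sum hu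
      _ = _ := by rw [sum_add_distrib]; simp
  obtain ⟨u₀, hu₀⟩ := hPA
  have h1 := hu u₀ hu₀
  have h2 := hc.degIn_lt u₀ (mem_inter.1 hu₀).2
  zify at *
  nlinarith [mul_nonneg (show (0 : ℤ) ≤ k - #(P ∩ A) by linarith)
    (show (0 : ℤ) ≤ #Z + #(P ∩ X) + #(P ∩ A) + k - (m + 1) by linarith)]

theorem IsCore.lt_card_of_separation {G : SimpleGraph V} {S A X D Z P Q : Finset V} {k m : ℕ}
    (hc : IsCore G S k A X D) (hdeg : ∀ u ∈ S, m ≤ degIn G S u) (hm : 3 * k ≤ m)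
    (hcov : A ∪ X = Z ∪ P ∪ Q) (hdisj : Disjoint P Q) (hP : P.Nonempty) (hQ : Q.Nonempty)
    (hPQ : ∀ u ∈ P, ∀ v ∈ Q, ¬ G.Adj u v) : k < #Z := by
  by_contra! hZ
  have hQP : ∀ u ∈ Q, ∀ v ∈ P, ¬ G.Adj u v := fun u hu v hv h => hPQ v hv u hu h.symm
  have hcov' : A ∪ X = Z ∪ Q ∪ P := by rw [hcov, union_assoc, union_comm P Q, ← union_assoc]
  have hne : ∀ P Q : Finset V, A ∪ X = Z ∪ P ∪ Q → P.Nonempty →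
      (∀ u ∈ P, ∀ v ∈ Q, ¬ G.Adj u v) → (P ∩ A).Nonempty := by
    rintro P Q hcov ⟨v, hv⟩ hPQ
    have hvm : v ∈ A ∪ X := by rw [hcov]; simp [hv]
    rcases mem_union.1 hvm with hvA | hvX
    · exact ⟨v, mem_inter.2 ⟨hv, hvA⟩⟩
    by_contra! hempty
    have hsub : A ⊆ Z ∪ Q ∩ A := by
      intro u hu
      have h1 : u ∈ Z ∪ P ∪ Q := hcov ▸ mem_union_left _ hu
      have h2 : u ∉ P ∩ A := by simp [hempty]
      simp only [mem_union, mem_inter] at h1 h2 ⊢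
      tauto
    have h3 := hc.lt_degIn v hvX
    have h4 := degIn_mono G hsub v
    have h5 := degIn_union_le G Z (Q ∩ A) v
    have h6 := degIn_eq_zero fun u (hu : u ∈ Q ∩ A) => hPQ v hv u (mem_inter.1 hu).1
    have h7 := degIn_le_card G Z v
    omega
  have hPA := hne P Q hcov hP hPQ
  have hQA := hne Q P hcov' hQ hQP
  have h1 := hc.two_mul_le_of_separation hdeg hm hcov hdisj hPQ hPA hQA
  have h2 := hc.two_mul_le_of_separation hdeg hm hcov' hdisj.symm hQP hQA hPA
  have hX : #(P ∩ X) + #(Q ∩ X) ≤ #X := by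
    rw [← card_union_of_disjoint (hdisj.mono inter_subset_left inter_subset_left)]
    exact card_le_card (union_subset inter_subset_right inter_subset_right)
  have hD : ∑ v ∈ D, degIn G (P ∩ A) v + ∑ v ∈ D, degIn G (Q ∩ A) v ≤ ∑ v ∈ D, degIn G A v := by
    rw [← sum_add_distrib]
    refine sum_le_sum fun v _ => ?_
    rw [← degIn_union_of_disjoint G (hdisj.mono inter_subset_left inter_subset_left)]
    exact degIn_mono G (union_subset inter_subset_right inter_subset_right) v
  have h3 := hc.weight_lt
  nlinarith [Nat.mul_le_mul_left k hX, Nat.mul_le_mul_left k hZ]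

theorem IsCore.le_card_union {G : SimpleGraph V} {S A X D : Finset V} {k m : ℕ}
    (hc : IsCore G S k A X D) (hdeg : ∀ u ∈ S, m ≤ degIn G S u) : m + 2 ≤ #(A ∪ X) + k := by
  obtain ⟨u, hu⟩ : A.Nonempty := card_pos.1 (by have := hc.lt_card; omega)
  have h1 := hdeg u (by rw [← hc.union_eq]; simp [hu])
  rw [← hc.union_eq] at h1
  have h2 := degIn_union_le G (A ∪ X) D u
  have h3 := hc.degIn_lt u hu
  have h4 := degIn_lt_card (G := G) (mem_union_left X hu)
  omega

theorem IsCore.not_colorableOn {G : SimpleGraph V} {S A X D : Finset V} {k m : ℕ}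
    (hc : IsCore G S k A X D) (hk : 1 ≤ k) (hm : 3 * k ≤ m) (hS : ¬ ColorableOn G S m)
    (hcrit : ∀ B ⊂ S, ColorableOn G B m) : ¬ ColorableOn G (A ∪ X) (m + 2 - 2 * k) := by
  rintro ⟨h, hhN, hh⟩
  obtain ⟨N, hN⟩ : ∃ N, N = m + 2 - 2 * k := ⟨_, rfl⟩
  rw [← hN] at hhN
  obtain ⟨a₀, ha₀⟩ : A.Nonempty := card_pos.1 (by have := hc.lt_card; omega)
  have hAXD : A ∪ (X ∪ D) = S := by rw [← union_assoc, hc.union_eq]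
  obtain ⟨c, hcm, hcp⟩ := hcrit (X ∪ D) (by
    rw [← hAXD]
    refine Finset.ssubset_iff_subset_ne.2 ⟨subset_union_right, fun heq => ?_⟩
    have : a₀ ∈ X ∪ D := heq ▸ mem_union_left _ ha₀
    rcases mem_union.1 this with h1 | h1
    · exact disjoint_left.1 hc.disjoint_AX ha₀ h1
    · exact disjoint_left.1 hc.disjoint_AD ha₀ h1)
  have hfin : ∀ g : V → ℕ, (∀ u ∈ A, g u < m) →
      (∀ u ∈ A, ∀ v ∈ X ∪ D, G.Adj u v → g u ≠ c v) →
      (∀ u ∈ A, ∀ v ∈ A, G.Adj u v → g u ≠ g v) → False := by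
    intro g hgm hgc hgg
    have hmem : ∀ v ∈ S, v ∉ A → v ∈ X ∪ D := fun v hv hvA => by
      rw [← hAXD] at hv
      exact (mem_union.1 hv).resolve_left hvA
    refine hS ⟨fun v => if v ∈ A then g v else c v, fun v hv => ?_, fun u hu v hv huv => ?_⟩
    · dsimp only
      split_ifs with h1
      · exact hgm v h1
      · exact hcm v (hmem v hv h1)
    · dsimp only
      split_ifs with h1 h2 h2
      · exact hgg u h1 v h2 huv
      · exact hgc u h1 v (hmem v hv h2) huv
      · exact (hgc v h2 u (hmem u hu h1) huv.symm).symm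
      · exact hcp u (hmem u hu h1) v (hmem v hv h2) huv
  let C := range m \ X.image c
  obtain ⟨R, hR⟩ : ∃ R : V → ℕ → Prop, ∀ u j, R u j ↔ ∃ v ∈ D, G.Adj u v ∧ c v = j :=
    ⟨_, fun _ _ => Iff.rfl⟩
  have hCX : ∀ j ∈ C, j < m ∧ ∀ v ∈ X, j ≠ c v := fun j hj => by
    obtain ⟨h1, h2⟩ := mem_sdiff.1 hj
    exact ⟨mem_range.1 h1, fun v hv hjv => h2 (hjv ▸ mem_image_of_mem c hv)⟩
  have hCcard : #C + #(X.image c) = m := by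
    rw [card_sdiff_add_card_eq_card, card_range]
    intro j hj
    obtain ⟨v, hv, rfl⟩ := mem_image.1 hj
    exact mem_range.2 (hcm v (mem_union_left _ hv))
  have hRle : ∀ u, #{j ∈ C | R u j} ≤ degIn G {v ∈ D | c v ∈ C} u := by
    intro u
    refine (card_le_card fun j hj => ?_).trans (card_image_le (f := c))
    obtain ⟨hjC, hj⟩ := mem_filter.1 hj
    obtain ⟨v, hv, huv, rfl⟩ := (hR u j).1 hj
    exact mem_image_of_mem c (mem_filter.2 ⟨mem_filter.2 ⟨hv, hjC⟩, huv⟩)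
  have hRk : ∀ u ∈ A, #{j ∈ C | R u j} < k := fun u hu =>
    ((hRle u).trans (degIn_mono G (filter_subset _ _) u)).trans_lt (hc.degIn_lt u hu)
  have hRsum : ∑ u ∈ A, #{j ∈ C | R u j} ≤ ∑ v ∈ D with c v ∈ C, degIn G A v := by
    rw [sum_degIn_comm]
    exact sum_le_sum fun u _ => hRle u
  have hRsum' : ∑ u ∈ A, #{j ∈ C | R u j} ≤ ∑ v ∈ D, degIn G A v :=
    hRsum.trans (sum_le_sum_of_subset (filter_subset _ _))
  have hw := hc.weight_lt
  have hassign : ∀ K, k ≤ K → K ≤ N →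
      ∑ u ∈ A, #{j ∈ C | R u j} + K * N < K * (#C + 1) → False := by
    intro K hkK hKN hlt
    obtain ⟨g, hg⟩ := exists_refined_assignment R h (range N) (by simpa using hKN) C A
      (fun u hu => mem_range.2 (hhN u (mem_union_left _ hu)))
      (fun u hu => (hRk u hu).trans_le hkK) (by simpa using hlt)
    refine hfin g (fun u hu => (hCX _ (hg u hu).1).1) (fun u hu v hv huv heq => ?_)
      fun u hu v hv huv heq => ?_
    · rcases mem_union.1 hv with hvX | hvD
      · exact (hCX _ (hg u hu).1).2 v hvX heq
      · exact (hg u hu).2.1 ((hR _ _).2 ⟨v, hvD, huv, heq.symm⟩)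
    · exact hh u (mem_union_left _ hu) v (mem_union_left _ hv) huv ((hg u hu).2.2 v hv heq)
  by_cases hinj : Set.InjOn c X
  swap
  · have h1 : #(X.image c) < #X := lt_of_le_of_ne card_image_le fun h => hinj (card_image_iff.1 h)
    refine hassign k le_rfl (by omega) ?_
    have h2 : m + 2 ≤ #C + 1 + #X := by omega
    have h3 : N + 2 * k = m + 2 := by omega
    nlinarith [Nat.mul_le_mul_left k h2, congrArg (k * ·) h3]
  have hCcard' : #C + #X = m := by rwa [card_image_of_injOn hinj] at hCcard
  by_cases hfree : ∃ v₀ ∈ X, ∀ v ∈ D, 0 < degIn G A v → c v ≠ c v₀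
  · obtain ⟨v₀, hv₀, hv₀D⟩ := hfree
    have hL : #((range N).erase (h v₀)) = N - 1 := by
      rw [card_erase_of_mem (mem_range.2 (hhN v₀ (mem_union_right _ hv₀))), card_range]
    have hNm : N - 1 + 2 * k = m + 1 := by omega
    obtain ⟨g, hg⟩ := exists_refined_assignment (K := k) R h ((range N).erase (h v₀))
      (by rw [hL]; omega) C {u ∈ A | h u ≠ h v₀}
      (fun u hu => by
        obtain ⟨hu, hne⟩ := mem_filter.1 hu
        exact mem_erase.2 ⟨hne, mem_range.2 (hhN u (mem_union_left _ hu))⟩)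
      (fun u hu => hRk u (mem_filter.1 hu).1) (by
        have h1 : ∑ u ∈ A with h u ≠ h v₀, #{j ∈ C | R u j} ≤ ∑ u ∈ A, #{j ∈ C | R u j} :=
          sum_le_sum_of_subset (filter_subset _ _)
        rw [hL]
        nlinarith [congrArg (k * ·) hNm, congrArg (k * ·) hCcard'])
    have hg' : ∀ u ∈ A, h u ≠ h v₀ → g u ∈ C ∧ ¬ R u (g u) ∧
        ∀ v ∈ A, h v ≠ h v₀ → g u = g v → h u = h v := fun u hu hne => by
      obtain ⟨h1, h2, h3⟩ := hg u (mem_filter.2 ⟨hu, hne⟩)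
      exact ⟨h1, h2, fun v hv hvne => h3 v (mem_filter.2 ⟨hv, hvne⟩)⟩
    refine hfin (fun u => if h u = h v₀ then c v₀ else g u) (fun u hu => ?_)
      (fun u hu v hv huv => ?_) fun u hu v hv huv => ?_
    · split_ifs with h1
      · exact hcm v₀ (mem_union_left _ hv₀)
      · exact (hCX _ (hg' u hu h1).1).1
    · split_ifs with h1
      · intro heq
        rcases mem_union.1 hv with hvX | hvD
        · obtain rfl := hinj hv₀ hvX heq
          exact hh u (mem_union_left _ hu) v₀ (mem_union_right _ hv₀) huv h1
        · refine hv₀D v hvD ?_ heq.symm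
          exact card_pos.2 ⟨u, mem_filter.2 ⟨hu, huv.symm⟩⟩
      · intro heq
        rcases mem_union.1 hv with hvX | hvD
        · exact (hCX _ (hg' u hu h1).1).2 v hvX heq
        · exact (hg' u hu h1).2.1 ((hR _ _).2 ⟨v, hvD, huv, heq.symm⟩)
    · have hne := hh u (mem_union_left _ hu) v (mem_union_left _ hv) huv
      split_ifs with h1 h2 h2
      · exact absurd (h1.trans h2.symm) hne
      · exact ((hCX _ (hg' v hv h2).1).2 v₀ hv₀).symm
      · exact (hCX _ (hg' u hu h1).1).2 v₀ hv₀
      · exact fun heq => hne ((hg' u hu h1).2.2 v hv h2 heq)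
  · push Not at hfree
    choose! r hrD hrA hrc using hfree
    have hX : #X ≤ ∑ v ∈ D with c v ∉ C, degIn G A v := by
      have hinjr : Set.InjOn r X := fun x hx y hy hxy =>
        hinj hx hy (by rw [← hrc x hx, ← hrc y hy, hxy])
      rw [← card_image_of_injOn hinjr]
      refine le_trans ?_ (sum_le_sum_of_subset (s := X.image r) fun v hv => ?_)
      · rw [card_eq_sum_ones]
        refine sum_le_sum fun v hv => ?_
        obtain ⟨x, hx, rfl⟩ := mem_image.1 hv
        exact hrA x hx
      · obtain ⟨x, hx, rfl⟩ := mem_image.1 hv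
        exact mem_filter.2 ⟨hrD x hx, fun hC => (hCX _ hC).2 x hx (hrc x hx)⟩
    have hsplit := sum_filter_add_sum_filter_not D (fun v => c v ∈ C) (degIn G A)
    refine hassign (k + 1) (by omega) (by omega) ?_
    have h3 : N + 2 * k = m + 2 := by omega
    nlinarith [congrArg (k * ·) h3, congrArg (k * ·) hCcard']

theorem kConnected_induce [Fintype V] {G : SimpleGraph V} {T : Finset V} {n : ℕ} (hT : n < #T)
    (hsep : ∀ Z P Q : Finset V, T = Z ∪ P ∪ Q → Disjoint P Q → P.Nonempty → Q.Nonempty →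
      (∀ u ∈ P, ∀ v ∈ Q, ¬ G.Adj u v) → n ≤ #Z) :
    KConnected ((⊤ : G.Subgraph).induce (T : Set V)).coe n := by
  refine ⟨by simpa using hT, ?_⟩
  rintro Y hY ⟨P, Q, hP, hQ, hPQ, hcov, hadj⟩
  let val : Set ((⊤ : G.Subgraph).induce (T : Set V)).verts → Finset V := fun W =>
    (Subtype.val '' W).toFinset
  have hval : ∀ W v, v ∈ val W ↔ ∃ hv : v ∈ T, (⟨v, hv⟩ : {x // x ∈ T}) ∈ W := fun W v => by
    simp only [val, Set.mem_toFinset]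
    constructor
    · rintro ⟨w, hw, rfl⟩
      exact ⟨w.2, hw⟩
    · rintro ⟨hv, hw⟩
      exact ⟨_, hw, rfl⟩
  have hcard : #(val Y) = Y.ncard := by
    rw [← Set.ncard_image_of_injective Y Subtype.val_injective, Set.ncard_eq_toFinset_card']
  refine hY.not_ge (hcard ▸ hsep (val Y) (val P) (val Q) ?_ ?_ ?_ ?_ ?_)
  · ext v
    simp only [mem_union, hval]
    constructor
    · intro hv
      by_cases hvY : (⟨v, hv⟩ : {x // x ∈ T}) ∈ Y
      · exact Or.inl (Or.inl ⟨hv, hvY⟩)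
      · have : (⟨v, hv⟩ : {x // x ∈ T}) ∈ P ∪ Q := hcov.symm ▸ hvY
        rcases this with h | h
        · exact Or.inl (Or.inr ⟨hv, h⟩)
        · exact Or.inr ⟨hv, h⟩
    · rintro ((⟨hv, -⟩ | ⟨hv, -⟩) | ⟨hv, -⟩) <;> exact hv
  · rw [disjoint_left]
    intro v hvP hvQ
    obtain ⟨_, hvP⟩ := (hval P v).1 hvP
    obtain ⟨_, hvQ⟩ := (hval Q v).1 hvQ
    exact Set.disjoint_left.1 hPQ hvP hvQ
  · obtain ⟨w, hw⟩ := hP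
    exact ⟨w, (hval P w).2 ⟨w.2, hw⟩⟩
  · obtain ⟨w, hw⟩ := hQ
    exact ⟨w, (hval Q w).2 ⟨w.2, hw⟩⟩
  · intro u hu v hv huv
    obtain ⟨huT, hu⟩ := (hval P u).1 hu
    obtain ⟨hvT, hv⟩ := (hval Q v).1 hv
    exact hadj _ hu _ hv (by simpa using ⟨huT, hvT, huv⟩)

theorem ColorableOn.of_induce {G : SimpleGraph V} {T : Finset V} {n : ℕ}
    (h : ((⊤ : G.Subgraph).induce (T : Set V)).coe.Colorable n) : ColorableOn G T n := by
  obtain ⟨f⟩ := h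
  refine ⟨fun v => if hv : v ∈ T then (f ⟨v, hv⟩ : ℕ) else 0, fun v hv => ?_,
    fun u hu v hv huv => ?_⟩
  · simp only [hv, dif_pos]
    exact (f ⟨v, hv⟩).isLt
  · simp only [hu, hv, dif_pos]
    exact fun heq => f.valid (v := ⟨u, hu⟩) (w := ⟨v, hv⟩) (by simpa using ⟨hu, hv, huv⟩)
      (Fin.ext heq)

theorem ColorableOn.colorable [Fintype V] {G : SimpleGraph V} {n : ℕ}
    (h : ColorableOn G univ n) : G.Colorable n := by
  obtain ⟨f, hfn, hf⟩ := h
  exact ⟨SimpleGraph.Coloring.mk (fun v => (⟨f v, hfn v (mem_univ v)⟩ : Fin n))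
    fun {u v} huv heq => hf u (mem_univ u) v (mem_univ v) huv (congrArg Fin.val heq)⟩

end Helpers

/-- Main theorem: for every `k ≥ 1`, every graph `G` with `χ(G) ≥ (3 + 1/16)k`
(i.e. `49k ≤ 16·χ(G)`) contains a `(k+1)`-connected subgraph with more than
`χ(G) − k` vertices and chromatic number at least `χ(G) − 2k + 2`. -/
theorem main_theorem [Fintype V] (k : ℕ) (hk : 1 ≤ k) (G : SimpleGraph V)
    (n : ℕ) (hn : G.chromaticNumber = n) (h : 49 * k ≤ 16 * n) :
    ∃ H : G.Subgraph, KConnected H.coe (k + 1) ∧ n - k < Nat.card H.verts ∧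
      ((n + 2 - 2 * k : ℕ) : ℕ∞) ≤ H.coe.chromaticNumber := by
  classical
  have hm : 3 * k ≤ n - 1 := by omega
  have hnot : ¬ ColorableOn G Finset.univ (n - 1) := fun hcol => by
    have h1 := hcol.colorable.chromaticNumber_le
    rw [hn, Nat.cast_le] at h1
    omega
  obtain ⟨S, hS, hcrit⟩ := exists_critical Finset.univ hnot
  have hdeg : ∀ u ∈ S, n - 1 ≤ degIn G S u := fun u hu => le_degIn_of_critical hS hcrit hu
  have hSne : S.Nonempty := by
    by_contra hempty
    rw [Finset.not_nonempty_iff_eq_empty] at hempty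
    exact hS ⟨fun _ => 0, by simp [hempty], by simp [hempty]⟩
  obtain ⟨A, X, D, hc⟩ := exists_isCore hSne hm hk hdeg
  have hcard := hc.le_card_union hdeg
  refine ⟨(⊤ : G.Subgraph).induce ((A ∪ X : Finset V) : Set V),
    kConnected_induce (by omega) fun Z P Q hcov hdisj hP hQ hPQ =>
      hc.lt_card_of_separation hdeg hm hcov hdisj hP hQ hPQ, ?_, ?_⟩
  · rw [SimpleGraph.Subgraph.induce_verts, Nat.card_coe_set_eq, Set.ncard_coe_finset]
    omega
  · by_contra! hlt
    have hcol : ((⊤ : G.Subgraph).induce ((A ∪ X : Finset V) : Set V)).coe.Colorable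
        (n - 1 + 2 - 2 * k) := by
      rw [← SimpleGraph.chromaticNumber_le_iff_colorable]
      have : n + 2 - 2 * k = n - 1 + 2 - 2 * k + 1 := by omega
      rw [this, Nat.cast_add, Nat.cast_one] at hlt
      exact Order.le_of_lt_add_one hlt
    exact hc.not_colorableOn hk hm hS hcrit (ColorableOn.of_induce hcol)
end

section
/- For every integer k ≥ 1, every graph G with choosability (list chromatic number) χ_ℓ(G) ≥ 3k contains a (k+1)-connected subgraph H with more than χ_ℓ(G) − k vertices and χ_ℓ(H) ≥ χ_ℓ(G) − 3k + 2. -/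
variable {V : Type*}

/-- `G` is `n`-choosable: for every assignment of lists of `n` colors to the vertices,
there is a proper coloring choosing each vertex's color from its list. -/
def Choosable (G : SimpleGraph V) (n : ℕ) : Prop :=
  ∀ L : V → Finset ℕ, (∀ v, (L v).card = n) →
    ∃ f : V → ℕ, (∀ v, f v ∈ L v) ∧ ∀ ⦃u v⦄, G.Adj u v → f u ≠ f v

/-- There is a coloring of `U` from the lists `L` that is proper on `U` and in which no vertex of
`U` gets the color `c x` of a neighbor `x ∈ X`. -/
def HasExtension (G : SimpleGraph V) (L : V → Finset ℕ) (c : V → ℕ) (X U : Finset V) : Prop :=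
  ∃ f : V → ℕ, (∀ u ∈ U, f u ∈ L u) ∧ (∀ u ∈ U, ∀ v ∈ U, G.Adj u v → f u ≠ f v) ∧
    ∀ u ∈ U, ∀ x ∈ X, G.Adj u x → f u ≠ c x

section Extension

variable {G : SimpleGraph V} {L : V → Finset ℕ} {c : V → ℕ} {X U : Finset V}

/-- A list longer than `X` has a color unused on `X`. -/
theorem exists_mem_list_ne {u : V} (h : X.card < (L u).card) : ∃ a ∈ L u, ∀ x ∈ X, a ≠ c x := by
  obtain ⟨a, ha, hac⟩ := Finset.exists_mem_notMem_of_card_lt_card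
    ((Finset.card_image_le (s := X) (f := c)).trans_lt h)
  exact ⟨a, ha, fun x hx e => hac (e ▸ Finset.mem_image_of_mem c hx)⟩

variable [DecidableEq V]

/-- Coloring one vertex `u` of `U` and moving it to the colored set `X`. -/
theorem HasExtension.of_insert {u : V} (hu : u ∈ U) {a : ℕ} (haL : a ∈ L u)
    (ha : ∀ x ∈ X, a ≠ c x) (hXU : Disjoint X U)
    (h : HasExtension G L (Function.update c u a) (insert u X) (U.erase u)) :
    HasExtension G L c X U := by
  obtain ⟨f, h1, h2, h3⟩ := h
  have hX : ∀ x ∈ X, x ≠ u := fun x hx e => Finset.disjoint_left.1 hXU hx (e ▸ hu)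
  have h3u : ∀ v ∈ U, v ≠ u → G.Adj v u → f v ≠ a := fun v hv hvu hadj => by
    simpa using h3 v (Finset.mem_erase.2 ⟨hvu, hv⟩) u (Finset.mem_insert_self _ _) hadj
  refine ⟨Function.update f u a, fun v hv => ?_, fun v hv w hw hvw => ?_, fun v hv x hx hvx => ?_⟩
  · by_cases e : v = u
    · subst e; simpa using haL
    · simpa [e] using h1 v (Finset.mem_erase.2 ⟨e, hv⟩)
  · by_cases e : v = u
    · subst e
      have e' : w ≠ v := hvw.ne'
      simpa [e'] using (h3u w hw e' hvw.symm).symm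
    · by_cases e' : w = u
      · subst e'
        simpa [e] using h3u v hv e hvw
      · simpa [e, e'] using
          h2 v (Finset.mem_erase.2 ⟨e, hv⟩) w (Finset.mem_erase.2 ⟨e', hw⟩) hvw
  · by_cases e : v = u
    · subst e; simpa using ha x hx
    · simpa [e, hX x hx] using
        h3 v (Finset.mem_erase.2 ⟨e, hv⟩) x (Finset.mem_insert_of_mem hx) hvx

/-- Greedy coloring. -/
theorem HasExtension.of_card_le (hXU : Disjoint X U)
    (h : ∀ u ∈ U, X.card + U.card ≤ (L u).card) : HasExtension G L c X U := by
  induction hn : U.card generalizing X U c with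
  | zero =>
    obtain rfl := Finset.card_eq_zero.1 hn
    exact ⟨c, by simp, by simp, by simp⟩
  | succ n ih =>
    obtain ⟨u, hu⟩ : U.Nonempty := Finset.card_pos.1 (by omega)
    have huX : u ∉ X := fun hx => Finset.disjoint_left.1 hXU hx hu
    obtain ⟨a, haL, ha⟩ := exists_mem_list_ne (L := L) (c := c) (X := X) (u := u)
      (by have := h u hu; omega)
    have hc := Finset.card_erase_of_mem hu
    refine .of_insert hu haL ha hXU (ih ?_ (fun v hv => ?_) (by omega))
    · rw [Finset.disjoint_insert_left]
      exact ⟨by simp, hXU.mono_right (Finset.erase_subset _ _)⟩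
    · have := h v (Finset.mem_of_mem_erase hv)
      rw [Finset.card_insert_of_notMem huX]
      omega

/-- Deleting a colored vertex `y` and its color from the lists of its neighbors. -/
theorem HasExtension.of_erase [DecidableRel G.Adj] {y : V}
    (h : HasExtension G (fun v => if G.Adj v y then (L v).erase (c y) else L v) c (X.erase y) U) :
    HasExtension G L c X U := by
  obtain ⟨f, h1, h2, h3⟩ := h
  refine ⟨f, fun u hu => ?_, h2, fun u hu x hx hux => ?_⟩
  · have := h1 u hu
    beta_reduce at this
    split_ifs at this
    · exact Finset.mem_of_mem_erase this
    · exact this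
  · by_cases e : x = y
    · subst e
      have := h1 u hu
      beta_reduce at this
      rw [if_pos hux] at this
      exact Finset.ne_of_mem_erase this
    · exact h3 u hu x (Finset.mem_erase.2 ⟨e, hx⟩) hux

/-- Coloring the two sides of a separation one after the other. -/
theorem HasExtension.of_separation {A B : Finset V} (hXU : Disjoint X U)
    (hadj : ∀ a ∈ A, ∀ b ∈ B, ¬ G.Adj a b)
    (h1 : HasExtension G L c X (U \ A))
    (h2 : ∀ c', HasExtension G L c' ((X ∩ A) ∪ ((X ∪ U) \ (A ∪ B))) (U ∩ A)) :
    HasExtension G L c X U := by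
  obtain ⟨f, f1, f2, f3⟩ := h1
  obtain ⟨g, g1, g2, g3⟩ := h2 (fun v => if v ∈ X then c v else f v)
  have key : ∀ u ∈ U, u ∈ A → ∀ v ∈ U, v ∉ A → G.Adj u v → g u ≠ f v := by
    intro u hu huA v hv hvA huv
    have hvX : v ∉ X := fun hx => Finset.disjoint_left.1 hXU hx hv
    have hvB : v ∉ B := fun hb => hadj u huA v hb huv
    simpa [hvX] using g3 u (by simp [hu, huA]) v (by simp [hv, hvA, hvB]) huv
  refine ⟨fun v => if v ∈ A then g v else f v, fun u hu => ?_, fun u hu v hv huv => ?_,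
    fun u hu x hx hux => ?_⟩
  · by_cases h : u ∈ A
    · simpa [h] using g1 u (by simp [hu, h])
    · simpa [h] using f1 u (by simp [hu, h])
  · by_cases h : u ∈ A <;> by_cases h' : v ∈ A
    · simpa [h, h'] using g2 u (by simp [hu, h]) v (by simp [hv, h']) huv
    · simpa [h, h'] using key u hu h v hv h' huv
    · simpa [h, h'] using (key v hv h' u hu h huv.symm).symm
    · simpa [h, h'] using f2 u (by simp [hu, h]) v (by simp [hv, h']) huv
  · by_cases h : u ∈ A
    · have hxB : x ∉ B := fun hb => hadj u h x hb hux
      simpa [h, hx] using g3 u (by simp [hu, h]) x (by simp [hx, hxB, em]) hux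
    · simpa [h] using f3 u (by simp [hu, h]) x hx hux

/-- If an induced subgraph containing `U` is `m`-choosable, the coloring of `X` extends to `U`
whenever each list on `U` has at least `m + |X|` colors. -/
theorem HasExtension.of_choosable {m : ℕ} {F : Finset V} (hUF : U ⊆ F)
    (hm : Choosable ((⊤ : G.Subgraph).induce (F : Set V)).coe m)
    (h : ∀ u ∈ U, m + X.card ≤ (L u).card) : HasExtension G L c X U := by
  have hl : ∀ v : V, ∃ S : Finset ℕ, S.card = m ∧ (v ∈ U → S ⊆ L v \ X.image c) := by
    intro v
    by_cases hv : v ∈ U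
    · have h1 : m ≤ (L v \ X.image c).card := by
        have := Finset.le_card_sdiff (X.image c) (L v)
        have := Finset.card_image_le (s := X) (f := c)
        have := h v hv
        omega
      obtain ⟨S, hS, hSm⟩ := Finset.exists_subset_card_eq h1
      exact ⟨S, hSm, fun _ => hS⟩
    · exact ⟨Finset.range m, by simp, fun h => absurd h hv⟩
  choose S hSm hS using hl
  obtain ⟨f, hf, hfa⟩ := hm (fun v => S v.1) (fun v => hSm v.1)
  have hFv : ∀ v ∈ U, v ∈ ((⊤ : G.Subgraph).induce (F : Set V)).verts := fun v hv => by
    simpa using hUF hv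
  have hmem : ∀ u (hu : u ∈ U), f ⟨u, hFv u hu⟩ ∈ L u \ X.image c := fun u hu => hS u hu (hf _)
  refine ⟨fun v => if hv : v ∈ U then f ⟨v, hFv v hv⟩ else 0, fun u hu => ?_,
    fun u hu v hv huv => ?_, fun u hu x hx hux => ?_⟩
  · simpa [hu] using (Finset.mem_sdiff.1 (hmem u hu)).1
  · simp only [hu, hv, dif_pos]
    exact hfa (by simpa [hUF hu, hUF hv] using huv)
  · simp only [hu, dif_pos]
    exact fun e => (Finset.mem_sdiff.1 (hmem u hu)).2 (e ▸ Finset.mem_image_of_mem c hx)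

end Extension

/-- An induced subgraph that has enough vertices but is not `(k+1)`-connected has a separation of
order at most `k`. -/
theorem exists_separation_of_not_kConnected [Fintype V] [DecidableEq V] {G : SimpleGraph V}
    {k : ℕ} {F : Finset V} (hF : k + 1 < F.card)
    (h : ¬ KConnected ((⊤ : G.Subgraph).induce (F : Set V)).coe (k + 1)) :
    ∃ A B : Finset V, A ⊆ F ∧ B ⊆ F ∧ A.Nonempty ∧ B.Nonempty ∧ Disjoint A B ∧
      (F \ (A ∪ B)).card ≤ k ∧ ∀ a ∈ A, ∀ b ∈ B, ¬ G.Adj a b := by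
  have hcard : Nat.card ((⊤ : G.Subgraph).induce (F : Set V)).verts = F.card := by
    simp
  rw [KConnected, hcard] at h
  push Not at h
  obtain ⟨S, hS, A, B, hA, hB, hAB, hu, hadj⟩ := h hF
  have hsub : ∀ T : Set ((⊤ : G.Subgraph).induce (F : Set V)).verts,
      (Set.toFinite (Subtype.val '' T)).toFinset ⊆ F := by
    intro T v hv
    obtain ⟨w, -, rfl⟩ := (Set.Finite.mem_toFinset _).1 hv
    simpa using w.2
  refine ⟨(Set.toFinite (Subtype.val '' A)).toFinset, (Set.toFinite (Subtype.val '' B)).toFinset,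
    hsub A, hsub B, ?_, ?_, ?_, ?_, ?_⟩
  · simpa using hA
  · simpa using hB
  · rw [Set.Finite.disjoint_toFinset]
    exact (Set.disjoint_image_iff Subtype.val_injective).2 hAB
  · have hle : (F \ ((Set.toFinite (Subtype.val '' A)).toFinset ∪
        (Set.toFinite (Subtype.val '' B)).toFinset) : Finset V) ⊆
        (Set.toFinite (Subtype.val '' S)).toFinset := by
      intro v hv
      rw [Finset.mem_sdiff, Finset.mem_union, Set.Finite.mem_toFinset, Set.Finite.mem_toFinset]
        at hv
      obtain ⟨hvF, hv⟩ := hv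
      have hvH : v ∈ ((⊤ : G.Subgraph).induce (F : Set V)).verts := by simpa using hvF
      rw [Set.Finite.mem_toFinset]
      refine ⟨⟨v, hvH⟩, ?_, rfl⟩
      by_contra hvS
      have : (⟨v, hvH⟩ : ((⊤ : G.Subgraph).induce (F : Set V)).verts) ∈ A ∪ B := by
        rw [hu]; exact hvS
      rcases this with h | h
      · exact hv (Or.inl ⟨_, h, rfl⟩)
      · exact hv (Or.inr ⟨_, h, rfl⟩)
    have h1 := Finset.card_le_card hle
    rw [← Set.ncard_eq_toFinset_card] at h1
    have h2 := Set.ncard_image_le (f := Subtype.val) (Set.toFinite S)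
    omega
  · intro a ha b hb hab
    obtain ⟨a', ha', rfl⟩ := (Set.Finite.mem_toFinset _).1 ha
    obtain ⟨b', hb', rfl⟩ := (Set.Finite.mem_toFinset _).1 hb
    refine hadj a' ha' b' hb' ?_
    have h1 := a'.2
    have h2 := b'.2
    simp only [SimpleGraph.Subgraph.induce_verts, Finset.mem_coe] at h1 h2
    simpa [h1, h2] using hab

/-- If all `(k+1)`-connected induced subgraphs with more than `N + 1 - k` vertices have small
choosability, then a partial coloring extends as long as the number of colored vertices and the
total number of colors missing from the lists are small. -/
theorem hasExtension_of_weight_lt [Fintype V] [DecidableEq V] {G : SimpleGraph V} {k N : ℕ}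
    (hk : 1 ≤ k) (hN : 3 * k ≤ N + 1)
    (hG : ∀ F : Finset V, KConnected ((⊤ : G.Subgraph).induce (F : Set V)).coe (k + 1) →
      N + 1 - k < F.card →
        ∃ m, Choosable ((⊤ : G.Subgraph).induce (F : Set V)).coe m ∧ m + 3 * k ≤ N + 2)
    (s : ℕ) {X U : Finset V} (hs : 2 * U.card + X.card ≤ s) {L : V → Finset ℕ} {c : V → ℕ}
    (hXU : Disjoint X U) (hL : ∀ u ∈ U, N - (L u).card ≤ k)
    (hw : k * X.card + ∑ u ∈ U, (N - (L u).card) < 2 * (k * k)) :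
    HasExtension G L c X U := by
  classical
  induction s using Nat.strong_induction_on generalizing X U L c with
  | _ s ih =>
  -- a vertex missing `k` colors can be colored right away
  by_cases hdef : ∃ u ∈ U, N - (L u).card = k
  · obtain ⟨u, hu, hdu⟩ := hdef
    have huX : u ∉ X := fun hx => Finset.disjoint_left.1 hXU hx hu
    have hsum := Finset.add_sum_erase U (fun u => N - (L u).card) hu
    simp only [hdu] at hsum
    have hX : X.card + 1 < 2 * k := by
      by_contra! h
      have := Nat.mul_le_mul_left k h
      rw [mul_add, mul_left_comm] at this
      omega
    obtain ⟨a, haL, ha⟩ := exists_mem_list_ne (L := L) (c := c) (X := X) (u := u) (by omega)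
    have hc := Finset.card_erase_add_one hu
    have hi := Finset.card_insert_of_notMem huX
    refine .of_insert hu haL ha hXU (ih (2 * (U.erase u).card + (insert u X).card) (by omega) le_rfl
      ?_ (fun v hv => hL v (Finset.mem_of_mem_erase hv)) ?_)
    · rw [Finset.disjoint_insert_left]
      exact ⟨by simp, hXU.mono_right (Finset.erase_subset _ _)⟩
    · rw [hi, mul_add]
      omega
  have hL' : ∀ u ∈ U, N - (L u).card + 1 ≤ k := fun u hu => by
    have := hL u hu
    have : N - (L u).card ≠ k := fun e => hdef ⟨u, hu, e⟩
    omega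
  -- a colored vertex with few uncolored neighbors can be deleted
  by_cases hlow : ∃ y ∈ X, (U.filter (fun u => G.Adj u y)).card ≤ k
  · obtain ⟨y, hy, hyk⟩ := hlow
    have hc := Finset.card_erase_add_one hy
    have hle : ∀ u ∈ U, N - (if G.Adj u y then (L u).erase (c y) else L u).card ≤
        (N - (L u).card) + if G.Adj u y then 1 else 0 := by
      intro u hu
      split_ifs
      · have := Finset.pred_card_le_card_erase (s := L u) (a := c y)
        omega
      · omega
    refine .of_erase (y := y) (ih (2 * U.card + (X.erase y).card) (by omega) le_rfl
      (hXU.mono_left (Finset.erase_subset _ _)) (fun u hu => ?_) ?_)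
    · have h1 := hle u hu
      have h2 := hL' u hu
      have h3 : (if G.Adj u y then 1 else 0) ≤ 1 := by split_ifs <;> omega
      omega
    · have h1 := Finset.sum_le_sum hle
      rw [Finset.sum_add_distrib, ← Finset.card_filter] at h1
      rw [← hc, mul_add] at hw
      omega
  push Not at hlow
  have hFc : (X ∪ U).card = X.card + U.card := Finset.card_union_of_disjoint hXU
  have hX : X.card < 2 * k := by
    by_contra! h
    have := Nat.mul_le_mul_left k h
    rw [mul_left_comm] at this
    omega
  -- small graphs are colored greedily
  by_cases hsmall : X.card + U.card ≤ N + 1 - k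
  · exact .of_card_le hXU fun u hu => by have := hL' u hu; omega
  push Not at hsmall
  by_cases hconn : KConnected ((⊤ : G.Subgraph).induce ((X ∪ U : Finset V) : Set V)).coe (k + 1)
  · obtain ⟨m, hm, hmk⟩ := hG _ hconn (by omega)
    exact .of_choosable Finset.subset_union_right hm fun u hu => by have := hL' u hu; omega
  obtain ⟨A, B, hA, hB, hAne, hBne, hAB, hC, hadj⟩ :=
    exists_separation_of_not_kConnected (by omega) hconn
  have side : ∀ A B : Finset V, A ⊆ X ∪ U → B ⊆ X ∪ U → A.Nonempty → B.Nonempty →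
      Disjoint A B → ((X ∪ U) \ (A ∪ B)).card ≤ k → (∀ a ∈ A, ∀ b ∈ B, ¬ G.Adj a b) →
      k * (X ∩ A).card + k * k + ∑ u ∈ U ∩ A, (N - (L u).card) < 2 * (k * k) →
      HasExtension G L c X U := by
    intro A B hA hB hAne hBne hAB hC hadj hwA
    have hUA : (U ∩ A).Nonempty := by
      by_contra hne
      rw [Finset.not_nonempty_iff_eq_empty] at hne
      obtain ⟨a, ha⟩ := hAne
      have hnU : ∀ v ∈ A, v ∉ U := fun v hv hvU => by
        have : v ∈ U ∩ A := Finset.mem_inter.2 ⟨hvU, hv⟩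
        simp [hne] at this
      have haX : a ∈ X := (Finset.mem_union.1 (hA ha)).resolve_right (hnU a ha)
      have hsub : U.filter (fun u => G.Adj u a) ⊆ (X ∪ U) \ (A ∪ B) := by
        intro u hu
        obtain ⟨hu, hua⟩ := Finset.mem_filter.1 hu
        have h1 : u ∉ A := fun h => hnU u h hu
        have h2 : u ∉ B := fun h => hadj a ha u h hua.symm
        simp [hu, h1, h2]
      have := Finset.card_le_card hsub
      have := hlow a haX
      omega
    have hUs : (U \ A).card + (U ∩ A).card = U.card := Finset.card_sdiff_add_card_inter U A
    have hUp := hUA.card_pos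
    have hBp := hBne.card_pos
    have hXs : (X ∩ A).card + (U ∩ A).card = A.card := by
      rw [← Finset.card_union_of_disjoint
        (hXU.mono Finset.inter_subset_left Finset.inter_subset_left),
        ← Finset.union_inter_distrib_right, Finset.inter_eq_right.2 hA]
    have hABc : ((X ∪ U) \ (A ∪ B)).card + (A.card + B.card) = (X ∪ U).card := by
      rw [← Finset.card_union_of_disjoint hAB]
      exact Finset.card_sdiff_add_card_eq_card (Finset.union_subset hA hB)
    have hXc := Finset.card_union_le (X ∩ A) ((X ∪ U) \ (A ∪ B))
    refine .of_separation hXU hadj ?_ fun c' => ?_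
    · refine ih (2 * (U \ A).card + X.card) (by omega) le_rfl
        (hXU.mono_right Finset.sdiff_subset) (fun u hu => hL u (Finset.mem_sdiff.1 hu).1) ?_
      have := Finset.sum_le_sum_of_subset (f := fun u => N - (L u).card)
        (Finset.sdiff_subset : U \ A ⊆ U)
      omega
    · refine ih (2 * (U ∩ A).card + ((X ∩ A) ∪ ((X ∪ U) \ (A ∪ B))).card) (by omega) le_rfl
        ?_ (fun u hu => hL u (Finset.mem_inter.1 hu).1) ?_
      · rw [Finset.disjoint_union_left]
        refine ⟨hXU.mono Finset.inter_subset_left Finset.inter_subset_left, ?_⟩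
        rw [Finset.disjoint_left]
        intro v hv hv'
        simp only [Finset.mem_sdiff, Finset.mem_union, Finset.mem_inter] at hv hv'
        exact hv.2 (Or.inl hv'.2)
      · have := Nat.mul_le_mul_left k (hXc.trans (Nat.add_le_add_left hC _))
        rw [mul_add] at this
        omega
  have hXAB : k * (X ∩ A).card + k * (X ∩ B).card ≤ k * X.card := by
    rw [← mul_add, ← Finset.card_union_of_disjoint
      (hAB.mono Finset.inter_subset_right Finset.inter_subset_right)]
    exact Nat.mul_le_mul_left k (Finset.card_le_card
      (Finset.union_subset Finset.inter_subset_left Finset.inter_subset_left))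
  have hUAB : ∑ u ∈ U ∩ A, (N - (L u).card) + ∑ u ∈ U ∩ B, (N - (L u).card) ≤
      ∑ u ∈ U, (N - (L u).card) := by
    rw [← Finset.sum_union (hAB.mono Finset.inter_subset_right Finset.inter_subset_right)]
    exact Finset.sum_le_sum_of_subset
      (Finset.union_subset Finset.inter_subset_left Finset.inter_subset_left)
  by_cases hwA : k * (X ∩ A).card + k * k + ∑ u ∈ U ∩ A, (N - (L u).card) < 2 * (k * k)
  · exact side A B hA hB hAne hBne hAB hC hadj hwA
  · refine side B A hB hA hBne hAne hAB.symm (by rwa [Finset.union_comm B A])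
      (fun b hb a ha h => hadj a ha b hb h.symm) ?_
    omega

/-- For every `k ≥ 1`, every graph `G` with choosability `χ_ℓ(G) = n ≥ 3k` contains a
`(k+1)`-connected subgraph `H` with more than `n − k` vertices and
`χ_ℓ(H) ≥ n − 3k + 2`. -/
theorem conn_subgraph_choosability [Fintype V] (k : ℕ) (hk : 1 ≤ k)
    (G : SimpleGraph V) (n : ℕ) (hn : IsLeast {m | Choosable G m} n) (h3 : 3 * k ≤ n) :
    ∃ H : G.Subgraph, KConnected H.coe (k + 1) ∧ n - k < Nat.card H.verts ∧
      ∀ m, Choosable H.coe m → n - 3 * k + 2 ≤ m := by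
  classical
  by_contra! hcon
  have hch : Choosable G (n - 1) := by
    intro L hL
    obtain ⟨f, h1, h2, -⟩ := hasExtension_of_weight_lt (G := G) (N := n - 1) hk (by omega)
      (fun F hF hFn => by
        obtain ⟨m, hm, hmn⟩ := hcon _ hF (by simp; omega)
        exact ⟨m, hm, by omega⟩)
      _ le_rfl (X := ∅) (U := Finset.univ) (L := L) (c := fun _ => 0) (by simp)
      (by simp [hL]) (by simp [hL]; omega)
    exact ⟨f, fun v => h1 v (Finset.mem_univ v),
      fun u v huv => h2 u (Finset.mem_univ u) v (Finset.mem_univ v) huv⟩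
  have := hn.2 hch
  omega
end
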